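/- arXiv:2601.06590 — 4 statements merged into one kernel-verified Lean document; each statement's English description precedes it below -/
import Mathlib

section
/- Let M(n) denote the maximum, over all simple graphs G on n vertices (n ≥ 3), of the (3,1)-density d_{3,1}(G). Then M(n) converges as n → ∞ and its limit equals 3/4. -/
/-!
Call `(v, a, b)` a mixed cherry if `v ~ a`, `b ≠ v` and `v ≁ b`. There are `∑ v, d(v) (n - 1 - d(v))`
mixed cherries, which is at most `n (n - 1)² / 4`. A triple of vertices spanning exactly one edge
supports exactly two of them (the centre is either end of the edge), so
`2 * klCount G 3 1 ≤ n (n - 1)² / 4` and every density is at most `3/4 * (n - 1) / (n - 2)`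
(`cherries_two_mul_le`, `card_cherries_le`, `klDensity_three_one_le`).

If adjacency is transitive on distinct vertices, every mixed cherry spans exactly one edge, so the
first inequality is an equality (`cherries_le_two_mul`). For two disjoint cliques of sizes `p` and
`q` with `p + q = n` this gives `2 * klCount G 3 1 = p q (n - 2)`; with `p = ⌊n/2⌋` the density is
at least `3/4` (`exists_three_quarters_le`). The limit follows by squeezing.
-/

open Finset Filter
open scoped Classical Topology

/-- The number of edges of `G` inside a finite vertex set `s`:
2-element subsets of `s` whose two elements are adjacent. -/
noncomputable def edgesOn {n : ℕ} (G : SimpleGraph (Fin n)) (s : Finset (Fin n)) : ℕ :=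
  ((s.powersetCard 2).filter (fun e => ∃ a ∈ e, ∃ b ∈ e, G.Adj a b)).card

/-- The number of `k`-element vertex subsets of `G` whose induced subgraph has
exactly `ℓ` edges. -/
noncomputable def klCount {n : ℕ} (G : SimpleGraph (Fin n)) (k ℓ : ℕ) : ℕ :=
  ((Finset.univ.powersetCard k).filter (fun s => edgesOn G s = ℓ)).card

/-- The `(k,ℓ)`-density of `G`: the number of `k`-element vertex subsets whose
induced subgraph has exactly `ℓ` edges, divided by `n.choose k`. -/
noncomputable def klDensity {n : ℕ} (G : SimpleGraph (Fin n)) (k ℓ : ℕ) : ℝ :=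
  (klCount G k ℓ : ℝ) / (n.choose k : ℝ)

/-- The vertices other than `v` that are not adjacent to `v`. -/
noncomputable def nonNbrs {n : ℕ} (G : SimpleGraph (Fin n)) (v : Fin n) : Finset (Fin n) :=
  univ.filter (fun b => b ≠ v ∧ ¬ G.Adj v b)

/-- The vertices adjacent to `v`. -/
noncomputable def nbrs {n : ℕ} (G : SimpleGraph (Fin n)) (v : Fin n) : Finset (Fin n) :=
  univ.filter (fun a => G.Adj v a)

/-- The mixed cherries of `G`: a centre `v` together with a neighbour and a non-neighbour of `v`,
in this order. -/
noncomputable def cherries {n : ℕ} (G : SimpleGraph (Fin n)) :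
    Finset (Σ _ : Fin n, Fin n × Fin n) :=
  univ.sigma (fun v => nbrs G v ×ˢ nonNbrs G v)

/-- The three vertices of a cherry. -/
noncomputable def cherrySupport {n : ℕ} (t : Σ _ : Fin n, Fin n × Fin n) : Finset (Fin n) :=
  {t.1, t.2.1, t.2.2}

lemma mem_cherries {n : ℕ} (G : SimpleGraph (Fin n)) (v a b : Fin n) :
    (⟨v, (a, b)⟩ : Σ _ : Fin n, Fin n × Fin n) ∈ cherries G ↔
      G.Adj v a ∧ b ≠ v ∧ ¬ G.Adj v b := by
  simp [cherries, nbrs, nonNbrs]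

lemma edgesOn_triple {n : ℕ} (G : SimpleGraph (Fin n)) {a b c : Fin n}
    (hab : a ≠ b) (hac : a ≠ c) (hbc : b ≠ c) :
    edgesOn G {a, b, c} = (if G.Adj a b then 1 else 0) + (if G.Adj a c then 1 else 0)
      + (if G.Adj b c then 1 else 0) := by
  have h1 : ({a, b} : Finset (Fin n)) ∉ ({{a, c}, {b, c}} : Finset (Finset (Fin n))) := by
    intro h
    simp only [Finset.mem_insert, Finset.mem_singleton] at h
    rcases h with h | h
    · have : b ∈ ({a, c} : Finset (Fin n)) := h ▸ by simp
      simp at this; tauto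
    · have : a ∈ ({b, c} : Finset (Fin n)) := h ▸ by simp
      simp at this; tauto
  have h2 : ({a, c} : Finset (Fin n)) ∉ ({{b, c}} : Finset (Finset (Fin n))) := by
    intro h
    rw [Finset.mem_singleton] at h
    have : a ∈ ({b, c} : Finset (Fin n)) := h ▸ by simp
    simp at this; tauto
  have hps : ({a, b, c} : Finset (Fin n)).powersetCard 2 = {{a, b}, {a, c}, {b, c}} := by
    symm
    apply Finset.eq_of_subset_of_card_le
    · intro e he
      simp only [Finset.mem_insert, Finset.mem_singleton] at he
      rw [Finset.mem_powersetCard]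
      rcases he with rfl | rfl | rfl
      · exact ⟨by intro x; simp; tauto, Finset.card_pair hab⟩
      · exact ⟨by intro x; simp; tauto, Finset.card_pair hac⟩
      · exact ⟨by intro x; simp; tauto, Finset.card_pair hbc⟩
    · rw [Finset.card_powersetCard, Finset.card_eq_three.2 ⟨a, b, c, hab, hac, hbc, rfl⟩,
        Finset.card_insert_of_notMem h1, Finset.card_insert_of_notMem h2, Finset.card_singleton]
      decide
  have hP : ∀ x y : Fin n, (∃ p ∈ ({x, y} : Finset (Fin n)), ∃ q ∈ ({x, y} : Finset (Fin n)),
      G.Adj p q) ↔ G.Adj x y := by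
    intro x y
    simp [G.adj_comm y x]
  unfold edgesOn
  rw [hps, Finset.card_filter, Finset.sum_insert h1, Finset.sum_insert h2, Finset.sum_singleton]
  simp only [hP]
  ring

/-- A triple spanning exactly one edge can be listed with that edge first. -/
lemma exists_of_edgesOn_eq_one {n : ℕ} (G : SimpleGraph (Fin n)) {s : Finset (Fin n)}
    (hs : s.card = 3) (h1 : edgesOn G s = 1) :
    ∃ x y z, x ≠ z ∧ y ≠ z ∧ G.Adj x y ∧ ¬ G.Adj x z ∧ ¬ G.Adj y z ∧ s = {x, y, z} := by
  obtain ⟨a, b, c, hab, hac, hbc, rfl⟩ := Finset.card_eq_three.1 hs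
  rw [edgesOn_triple G hab hac hbc] at h1
  by_cases h₁ : G.Adj a b <;> by_cases h₂ : G.Adj a c <;> by_cases h₃ : G.Adj b c <;>
    simp [h₁, h₂, h₃] at h1
  · exact ⟨a, b, c, hac, hbc, h₁, h₂, h₃, rfl⟩
  · refine ⟨a, c, b, hab, hbc.symm, h₂, h₁, fun h => h₃ h.symm, ?_⟩
    ext x; simp; tauto
  · refine ⟨b, c, a, hab.symm, hac.symm, h₃, fun h => h₁ h.symm, fun h => h₂ h.symm, ?_⟩
    ext x; simp; tauto

/-- A triple spanning exactly one edge supports exactly two mixed cherries. -/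
lemma card_fiber {n : ℕ} (G : SimpleGraph (Fin n)) {s : Finset (Fin n)}
    (hs : s.card = 3) (h1 : edgesOn G s = 1) :
    ((cherries G).filter (fun t => cherrySupport t = s)).card = 2 := by
  obtain ⟨x, y, z, hxz, hyz, hxy, nxz, nyz, rfl⟩ := exists_of_edgesOn_eq_one G hs h1
  have hne := hxy.ne
  rw [Finset.card_eq_two]
  refine ⟨⟨x, (y, z)⟩, ⟨y, (x, z)⟩, by simp [hne], ?_⟩
  ext ⟨v, a, b⟩
  rw [Finset.mem_filter, mem_cherries]
  constructor
  · rintro ⟨⟨hva, hbv, hvb⟩, h⟩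
    simp only [cherrySupport] at h
    have hv : v ∈ ({x, y, z} : Finset (Fin n)) := h ▸ by simp
    have ha : a ∈ ({x, y, z} : Finset (Fin n)) := h ▸ by simp
    have hb : b ∈ ({x, y, z} : Finset (Fin n)) := h ▸ by simp
    simp only [Finset.mem_insert, Finset.mem_singleton] at hv ha hb
    have nzx : ¬ G.Adj z x := fun h => nxz h.symm
    have nzy : ¬ G.Adj z y := fun h => nyz h.symm
    have hyx := hxy.symm
    rcases hv with rfl | rfl | rfl <;> rcases ha with rfl | rfl | rfl <;>
      rcases hb with rfl | rfl | rfl <;> simp_all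
  · intro h
    simp only [Finset.mem_insert, Finset.mem_singleton, Sigma.mk.injEq, heq_eq_eq,
      Prod.mk.injEq] at h
    rcases h with ⟨rfl, rfl, rfl⟩ | ⟨rfl, rfl, rfl⟩
    · exact ⟨⟨hxy, hxz.symm, nxz⟩, rfl⟩
    · refine ⟨⟨hxy.symm, hyz.symm, nyz⟩, ?_⟩
      simp only [cherrySupport]
      exact Finset.insert_comm _ _ _

lemma two_mul_klCount {n : ℕ} (G : SimpleGraph (Fin n)) :
    2 * klCount G 3 1 = ((cherries G).filter
      (fun t => cherrySupport t ∈ (univ.powersetCard 3).filter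
        (fun s : Finset (Fin n) => edgesOn G s = 1))).card := by
  set S := (univ.powersetCard 3).filter (fun s : Finset (Fin n) => edgesOn G s = 1) with hS
  have hmap : Set.MapsTo cherrySupport
      (((cherries G).filter (fun t => cherrySupport t ∈ S) : Finset _) : Set _)
      (S : Set (Finset (Fin n))) :=
    fun t ht => (Finset.mem_filter.1 (Finset.mem_coe.1 ht)).2
  rw [Finset.card_eq_sum_card_fiberwise hmap]
  rw [Finset.sum_congr rfl (g := fun _ => 2), Finset.sum_const, smul_eq_mul, mul_comm, klCount]
  intro s hs
  have hs' := Finset.mem_filter.1 hs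
  rw [Finset.filter_filter, ← card_fiber G (Finset.mem_powersetCard.1 hs'.1).2 hs'.2]
  congr 1
  apply Finset.filter_congr
  intro t _
  constructor
  · exact fun h => h.2
  · intro h
    exact ⟨h ▸ hs, h⟩

lemma cherries_two_mul_le {n : ℕ} (G : SimpleGraph (Fin n)) :
    2 * klCount G 3 1 ≤ (cherries G).card := by
  rw [two_mul_klCount]
  exact Finset.card_filter_le _ _

/-- In a disjoint union of cliques every mixed cherry spans exactly one edge. -/
lemma cherries_le_two_mul {n : ℕ} (G : SimpleGraph (Fin n))
    (hG : ∀ v a b, G.Adj v a → b ≠ v → G.Adj a b → G.Adj v b) :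
    (cherries G).card ≤ 2 * klCount G 3 1 := by
  rw [two_mul_klCount, Finset.filter_true_of_mem]
  rintro ⟨v, a, b⟩ ht
  obtain ⟨hva, hbv, hvb⟩ := (mem_cherries G v a b).1 ht
  have hab : a ≠ b := by rintro rfl; exact hvb hva
  have nab : ¬ G.Adj a b := fun h => hvb (hG v a b hva hbv h)
  rw [Finset.mem_filter, Finset.mem_powersetCard]
  refine ⟨⟨Finset.subset_univ _, Finset.card_eq_three.2 ⟨v, a, b, hva.ne, hbv.symm, hab, rfl⟩⟩, ?_⟩
  simp only [cherrySupport]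
  rw [edgesOn_triple G hva.ne hbv.symm hab]
  simp [hva, hvb, nab]

lemma card_cherries {n : ℕ} (G : SimpleGraph (Fin n)) :
    (cherries G).card = ∑ v, (nbrs G v).card * (nonNbrs G v).card := by
  simp [cherries, Finset.card_sigma, Finset.card_product]

lemma card_nbrs_add {n : ℕ} (G : SimpleGraph (Fin n)) (v : Fin n) :
    (nbrs G v).card + (nonNbrs G v).card + 1 = n := by
  have h1 : Disjoint (nbrs G v) (nonNbrs G v) := by
    rw [Finset.disjoint_left]
    intro a ha hb
    simp only [nbrs, nonNbrs, Finset.mem_filter] at ha hb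
    exact hb.2.2 ha.2
  have h2 : nbrs G v ∪ nonNbrs G v = univ.erase v := by
    ext a
    simp only [nbrs, nonNbrs, Finset.mem_union, Finset.mem_filter, Finset.mem_univ, true_and,
      Finset.mem_erase, and_true]
    constructor
    · rintro (h | h)
      · exact h.ne'
      · exact h.1
    · intro h
      by_cases hA : G.Adj v a
      · exact Or.inl hA
      · exact Or.inr ⟨h, hA⟩
  rw [← Finset.card_union_of_disjoint h1, h2, Finset.card_erase_add_one (Finset.mem_univ v)]
  simp

lemma card_cherries_le {n : ℕ} (G : SimpleGraph (Fin n)) :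
    ((cherries G).card : ℝ) ≤ n * ((n - 1) ^ 2 / 4) := by
  rw [card_cherries]
  push_cast
  calc (∑ v, ((nbrs G v).card : ℝ) * ((nonNbrs G v).card : ℝ))
      ≤ ∑ _v : Fin n, ((n : ℝ) - 1) ^ 2 / 4 := by
        apply Finset.sum_le_sum
        intro v _
        have h : ((nbrs G v).card : ℝ) + (nonNbrs G v).card + 1 = n := by
          exact_mod_cast card_nbrs_add G v
        rw [← h]
        nlinarith [sq_nonneg (((nbrs G v).card : ℝ) - (nonNbrs G v).card)]
    _ = n * (((n : ℝ) - 1) ^ 2 / 4) := by simp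

lemma cast_choose_three (n : ℕ) : (n.choose 3 : ℝ) = n * (n - 1) * (n - 2) / 6 := by
  rw [Nat.cast_choose_eq_descPochhammer_div]
  simp [descPochhammer_succ_right, Nat.factorial]

lemma klDensity_three_one_le {n : ℕ} (hn : 3 ≤ n) (G : SimpleGraph (Fin n)) :
    klDensity G 3 1 ≤ 3 / 4 * (1 + 1 / ((n : ℝ) - 2)) := by
  have hn' : (3 : ℝ) ≤ n := by exact_mod_cast hn
  have h1 : 2 * (klCount G 3 1 : ℝ) ≤ (cherries G).card := by
    exact_mod_cast cherries_two_mul_le G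
  have h2 := h1.trans (card_cherries_le G)
  have p1 : (0 : ℝ) < n - 1 := by linarith
  have p2 : (0 : ℝ) < n - 2 := by linarith
  have p0 : (0 : ℝ) < n := by linarith
  rw [klDensity, cast_choose_three, div_le_iff₀ (by positivity)]
  have : 3 / 4 * (1 + 1 / ((n : ℝ) - 2)) * (n * (n - 1) * (n - 2) / 6)
      = n * ((n - 1) ^ 2 / 4) / 2 := by
    field_simp
    ring
  linarith

/-- The disjoint union of the complete graphs on `{i | i < m}` and `{i | m ≤ i}`. -/
def twoCliques (n m : ℕ) : SimpleGraph (Fin n) where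
  Adj a b := a ≠ b ∧ (a.val < m ↔ b.val < m)
  symm := ⟨fun _ _ h => ⟨h.1.symm, h.2.symm⟩⟩
  loopless := ⟨fun _ h => h.1 rfl⟩

lemma card_val_lt (p q : ℕ) :
    (univ.filter (fun i : Fin (p + q) => i.val < p)).card = p := by
  rw [Fin.card_filter_val_lt]
  simp

lemma card_not_val_lt (p q : ℕ) :
    (univ.filter (fun i : Fin (p + q) => ¬ i.val < p)).card = q := by
  have h := Finset.card_filter_add_card_filter_not (s := (univ : Finset (Fin (p + q))))
    (fun i => i.val < p)
  rw [card_val_lt, Finset.card_univ, Fintype.card_fin] at h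
  omega

lemma card_nonNbrs_twoCliques (p q : ℕ) (v : Fin (p + q)) :
    (nonNbrs (twoCliques (p + q) p) v).card = if v.val < p then q else p := by
  split_ifs with hv
  · refine Eq.trans ?_ (card_not_val_lt p q)
    congr 1
    ext b
    simp only [nonNbrs, Finset.mem_filter, Finset.mem_univ, true_and]
    simp only [twoCliques]
    constructor
    · rintro ⟨h1, h2⟩ h3
      exact h2 ⟨h1.symm, by tauto⟩
    · intro h
      exact ⟨by rintro rfl; exact h hv, fun h2 => h (h2.2.1 hv)⟩
  · refine Eq.trans ?_ (card_val_lt p q)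
    congr 1
    ext b
    simp only [nonNbrs, Finset.mem_filter, Finset.mem_univ, true_and]
    simp only [twoCliques]
    constructor
    · rintro ⟨h1, h2⟩
      by_contra h3
      exact h2 ⟨h1.symm, by tauto⟩
    · intro h
      exact ⟨by rintro rfl; exact hv h, fun h2 => hv (h2.2.2 h)⟩

lemma card_cherries_twoCliques (p q : ℕ) :
    ((cherries (twoCliques (p + q) p)).card : ℝ) = p * q * ((p + q : ℝ) - 2) := by
  have key : ∀ v : Fin (p + q),
      ((nbrs (twoCliques (p + q) p) v).card : ℝ) * ((nonNbrs (twoCliques (p + q) p) v).card : ℝ)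
        = if v.val < p then ((p : ℝ) - 1) * q else ((q : ℝ) - 1) * p := by
    intro v
    have h : ((nbrs (twoCliques (p + q) p) v).card : ℝ)
        + (nonNbrs (twoCliques (p + q) p) v).card + 1 = p + q := by
      exact_mod_cast card_nbrs_add (twoCliques (p + q) p) v
    rw [card_nonNbrs_twoCliques] at h ⊢
    split_ifs at h ⊢ with hv
    · rw [show ((nbrs (twoCliques (p + q) p) v).card : ℝ) = p - 1 by linarith]
    · rw [show ((nbrs (twoCliques (p + q) p) v).card : ℝ) = q - 1 by linarith]
  rw [card_cherries]
  push_cast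
  rw [Finset.sum_congr rfl (fun v _ => key v), Finset.sum_ite, Finset.sum_const, Finset.sum_const,
    card_val_lt, card_not_val_lt]
  simp only [nsmul_eq_mul]
  ring

lemma exists_three_quarters_le {n : ℕ} (hn : 3 ≤ n) :
    ∃ G : SimpleGraph (Fin n), 3 / 4 ≤ klDensity G 3 1 := by
  obtain ⟨p, q, rfl, hpq⟩ : ∃ p q : ℕ, n = p + q ∧ (q = p ∨ q = p + 1) :=
    ⟨n / 2, n - n / 2, by omega, by omega⟩
  refine ⟨twoCliques (p + q) p, ?_⟩
  have h1 : ((cherries (twoCliques (p + q) p)).card : ℝ)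
      ≤ 2 * (klCount (twoCliques (p + q) p) 3 1 : ℝ) := by
    have := cherries_le_two_mul (twoCliques (p + q) p) (by
      rintro v a b ⟨_, h1⟩ hb ⟨_, h2⟩
      exact ⟨hb.symm, h1.trans h2⟩)
    exact_mod_cast this
  rw [card_cherries_twoCliques] at h1
  have hn' : (3 : ℝ) ≤ (p : ℝ) + q := by exact_mod_cast hn
  have p1 : (0 : ℝ) < (p : ℝ) + q - 1 := by linarith
  have p2 : (0 : ℝ) < (p : ℝ) + q - 2 := by linarith
  have p0 : (0 : ℝ) < (p : ℝ) + q := by linarith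
  rw [klDensity, cast_choose_three]
  push_cast
  rw [le_div_iff₀ (by positivity)]
  -- `4 p q = (p + q)² - (q - p)² ≥ (p + q) (p + q - 1)` since `(q - p)² ≤ 1 ≤ p + q`.
  have h4 : ((p : ℝ) + q) * (p + q - 1) ≤ 4 * (p * q) := by
    rcases hpq with rfl | rfl
    · nlinarith
    · push_cast at *
      nlinarith
  nlinarith [mul_le_mul_of_nonneg_right h4 p2.le]

/-- The maximal `(3,1)`-density over graphs on `n ≥ 3` vertices tends to `3/4`. -/
theorem edgeInducibility_three_one (M : ℕ → ℝ)
    (hM : ∀ n, 3 ≤ n →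
      IsGreatest {d : ℝ | ∃ G : SimpleGraph (Fin n), d = klDensity G 3 1} (M n)) :
    Tendsto M atTop (𝓝 (3 / 4 : ℝ)) := by
  have hlim : Tendsto (fun n : ℕ => 3 / 4 * (1 + 1 / ((n : ℝ) - 2))) atTop (𝓝 (3 / 4 : ℝ)) := by
    have h1 : Tendsto (fun n : ℕ => (n : ℝ) - 2) atTop atTop :=
      tendsto_atTop_add_const_right _ (-2 : ℝ) tendsto_natCast_atTop_atTop
    have h2 : Tendsto (fun n : ℕ => 1 / ((n : ℝ) - 2)) atTop (𝓝 0) :=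
      h1.const_div_atTop 1
    simpa using (h2.const_add 1).const_mul (3 / 4 : ℝ)
  refine tendsto_of_tendsto_of_tendsto_of_le_of_le' tendsto_const_nhds hlim ?_ ?_
  · filter_upwards [eventually_ge_atTop 3] with n hn
    obtain ⟨G, hG⟩ := exists_three_quarters_le hn
    exact hG.trans ((hM n hn).2 ⟨G, rfl⟩)
  · filter_upwards [eventually_ge_atTop 3] with n hn
    obtain ⟨G, hG⟩ := (hM n hn).1
    rw [hG]
    exact klDensity_three_one_le hn G
end

section
/- Let M(n) denote the maximum, over all simple graphs G on n vertices (n ≥ 4), of the (4,1)-density d_{4,1}(G). Then M(n) converges as n → ∞ and its limit equals 72/125. -/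
/-!
Blow up each vertex of `G` to a clique, with weights `p` on the vertices, and let `patProb` be the
probability that four independent samples `a, b, c, d` have `a, b` as their only related pair, where
related means equal or adjacent. With uniform weights this dominates `4 * klCount / n ^ 4`, since a
vertex set with one edge comes from four ordered quadruples (`card_quadruples`). So the upper bound
on the density follows from `patProb ≤ 12 / 125` on the whole simplex, which is proved by two kinds
of mass transfer, in the style of Motzkin-Straus and Zykov.

* Between two related vertices `patProb` is a convex quadratic function of the transferred mass
  (`patProb_shift`), so one of the two vertices can be emptied. Repeating this makes the support
  free of adjacent pairs, and there `patProb` is the polynomial `s₂ - s₂² - 2 s₃ + 2 s₄` in the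
  power sums of the weights (`patProb_eq_powerPoly`).
* With `x + y` fixed, this polynomial is affine in `x y` (`powerPoly_shift`), so a maximizer of
  minimal support has all its `k` nonzero weights equal (`powerPoly_le`). The value is then
  `(k - 1) (k - 2) / k ^ 3`, which over positive integers is largest at `k = 5`, where it is
  `12 / 125`.

The lower bound comes from the disjoint union of five nearly equal cliques (`fiveCliques_count`).
-/

open Finset Filter
open scoped Classical Topology

/-! ### Disjoint cliques: optimizing the weights -/

/-- The polynomial `s₂ - s₂² - 2 s₃ + 2 s₄` in the power sums of `p`. -/
noncomputable def powerPoly {ι : Type*} [Fintype ι] (p : ι → ℝ) : ℝ :=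
  (∑ i, p i ^ 2) - (∑ i, p i ^ 2) ^ 2 - 2 * (∑ i, p i ^ 3) + 2 * ∑ i, p i ^ 4

/-- Moving the mass `t` from `y` to `x`. -/
noncomputable def shift {ι : Type*} (p : ι → ℝ) (x y : ι) (t : ℝ) (i : ι) : ℝ :=
  p i + t * ((if i = x then 1 else 0) - (if i = y then 1 else 0))

/-- The set of indices carrying nonzero weight. -/
noncomputable def supp {ι : Type*} [Fintype ι] (p : ι → ℝ) : Finset ι :=
  Finset.univ.filter (fun i => p i ≠ 0)

section weights

variable {ι : Type*}

lemma shift_left (p : ι → ℝ) {x y : ι} (h : x ≠ y) (t : ℝ) : shift p x y t x = p x + t := by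
  simp [shift, h]

lemma shift_right (p : ι → ℝ) {x y : ι} (h : x ≠ y) (t : ℝ) : shift p x y t y = p y - t := by
  simp [shift, h.symm, sub_eq_add_neg]

lemma shift_other (p : ι → ℝ) {x y i : ι} (hx : i ≠ x) (hy : i ≠ y) (t : ℝ) :
    shift p x y t i = p i := by
  simp [shift, hx, hy]

variable [Fintype ι]

lemma sum_shift_pow (p : ι → ℝ) {x y : ι} (h : x ≠ y) (t : ℝ) (k : ℕ) :
    ∑ i, shift p x y t i ^ k
      = (∑ i, p i ^ k) - p x ^ k - p y ^ k + (p x + t) ^ k + (p y - t) ^ k := by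
  have key : ∀ f : ι → ℝ, ∑ i, f i = f x + f y + ∑ i ∈ (univ.erase x).erase y, f i := by
    intro f
    rw [add_assoc, Finset.add_sum_erase _ f (by simp [h.symm]), Finset.add_sum_erase _ f (by simp)]
  rw [key, key (fun i => p i ^ k), shift_left p h, shift_right p h]
  have : ∑ i ∈ (univ.erase x).erase y, shift p x y t i ^ k
      = ∑ i ∈ (univ.erase x).erase y, p i ^ k := by
    refine Finset.sum_congr rfl fun i hi => ?_
    simp only [Finset.mem_erase] at hi
    rw [shift_other p hi.2.1 hi.1]
  rw [this]; ring

lemma shift_mem {p : ι → ℝ} (hp : p ∈ stdSimplex ℝ ι) {x y : ι} (h : x ≠ y) {t : ℝ}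
    (h1 : 0 ≤ p x + t) (h2 : 0 ≤ p y - t) : shift p x y t ∈ stdSimplex ℝ ι := by
  refine ⟨fun i => ?_, ?_⟩
  · by_cases hx : i = x
    · subst hx; rwa [shift_left p h]
    by_cases hy : i = y
    · subst hy; rwa [shift_right p h]
    rw [shift_other p hx hy]; exact hp.1 i
  · have := sum_shift_pow p h t 1
    simp only [pow_one] at this
    rw [this, hp.2]; ring

/-- Emptying one of two positive coordinates into the other shrinks the support. -/
lemma supp_shift_lt {p : ι → ℝ} {x y : ι} (h : x ≠ y) (hx : p x ≠ 0) (hy : p y ≠ 0) {t : ℝ}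
    (ht : p x + t = 0 ∨ p y - t = 0) : (supp (shift p x y t)).card < (supp p).card := by
  refine Finset.card_lt_card ?_
  rw [Finset.ssubset_iff_of_subset]
  · rcases ht with ht | ht
    · exact ⟨x, by simp [supp, hx], by simp [supp, shift_left p h, ht]⟩
    · exact ⟨y, by simp [supp, hy], by simp [supp, shift_right p h, ht]⟩
  · intro i hi
    simp only [supp, Finset.mem_filter, Finset.mem_univ, true_and] at hi ⊢
    by_cases h1 : i = x
    · exact h1 ▸ hx
    by_cases h2 : i = y
    · exact h2 ▸ hy
    rwa [shift_other p h1 h2] at hi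

/-- For fixed `p x + p y` the polynomial `powerPoly` is affine in the product `p x * p y`. -/
lemma powerPoly_shift (p : ι → ℝ) {x y : ι} (h : x ≠ y) :
    ∃ γ : ℝ, ∀ t, powerPoly (shift p x y t)
      = powerPoly p + γ * ((p x + t) * (p y - t) - p x * p y) := by
  refine ⟨-2 + 6 * (p x + p y) - 8 * (p x + p y) ^ 2 + 8 * (p x * p y)
    + 4 * ∑ i, p i ^ 2, fun t => ?_⟩
  simp only [powerPoly, sum_shift_pow p h]
  ring

lemma equal_parts_bound (k : ℕ) (hk : 1 ≤ k) :
    ((k : ℝ) - 1) * (k - 2) / k ^ 3 ≤ 12 / 125 := by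
  have h1 : (1 : ℝ) ≤ k := by exact_mod_cast hk
  rw [div_le_div_iff₀ (by positivity) (by norm_num)]
  -- the right side minus the left side is `(k - 5) * (12 * k ^ 2 - 65 * k + 50)`
  rcases Nat.lt_or_ge k 5 with h | h
  · interval_cases k <;> norm_num
  · have h5 : (5 : ℝ) ≤ k := by exact_mod_cast h
    nlinarith [mul_nonneg (sub_nonneg.2 h5) (sub_nonneg.2 h5),
      mul_nonneg (mul_nonneg (sub_nonneg.2 h5) (sub_nonneg.2 h5)) (sub_nonneg.2 h5)]

/-- Among the maximizers of `powerPoly` on the simplex, one of minimal support has all its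
nonzero coordinates equal, which leaves the one-parameter family of equal parts. -/
lemma powerPoly_le {p : ι → ℝ} (hp : p ∈ stdSimplex ℝ ι) : powerPoly p ≤ 12 / 125 := by
  have hcont : Continuous (powerPoly : (ι → ℝ) → ℝ) := by
    unfold powerPoly; fun_prop
  obtain ⟨m, hm, hmax⟩ := (isCompact_stdSimplex ℝ ι).exists_isMaxOn ⟨p, hp⟩ hcont.continuousOn
  let A : Set (ι → ℝ) := {q | q ∈ stdSimplex ℝ ι ∧ powerPoly q = powerPoly m}
  obtain ⟨q, ⟨hq, hqm⟩, hmin⟩ : ∃ q ∈ A, ∀ r ∈ A, (supp q).card ≤ (supp r).card := by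
    have hA : A.Nonempty := ⟨m, hm, rfl⟩
    exact ⟨Function.argminOn (fun r => (supp r).card) A hA, Function.argminOn_mem _ _ _,
      fun r hr => Function.argminOn_le (fun r => (supp r).card) A hr⟩
  have hle : ∀ r ∈ stdSimplex ℝ ι, powerPoly r ≤ powerPoly q := fun r hr => hqm ▸ hmax hr
  have hlt : ∀ x y, q x ≠ 0 → q y ≠ 0 → ¬ q x < q y := by
    intro x y hx0 hy0 hxy
    have hne : x ≠ y := by rintro rfl; exact lt_irrefl _ hxy
    have hx : 0 < q x := lt_of_le_of_ne (hq.1 x) hx0.symm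
    have hy : 0 < q y := lt_of_le_of_ne (hq.1 y) hy0.symm
    obtain ⟨γ, hγ⟩ := powerPoly_shift q hne
    -- averaging the two coordinates raises their product, so `γ ≤ 0`
    have h1 := hle _ (shift_mem hq hne (t := (q y - q x) / 2) (by linarith) (by linarith))
    -- merging them makes the product vanish, so `γ ≥ 0`
    have hmem := shift_mem hq hne (t := q y) (by linarith) (by linarith)
    have h2 := hle _ hmem
    rw [hγ] at h1 h2
    have e1 : (q x + (q y - q x) / 2) * (q y - (q y - q x) / 2) - q x * q y
        = ((q y - q x) / 2) ^ 2 := by ring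
    have e2 : (q x + q y) * (q y - q y) - q x * q y = - (q x * q y) := by ring
    rw [e1] at h1
    rw [e2] at h2
    have hs : 0 < ((q y - q x) / 2) ^ 2 := by
      have : 0 < (q y - q x) / 2 := by linarith
      positivity
    have hpr : 0 < q x * q y := mul_pos hx hy
    have g1 : γ ≤ 0 := by
      by_contra hc
      have := mul_pos (not_le.1 hc) hs
      linarith
    have g2 : 0 ≤ γ := by
      by_contra hc
      have := mul_pos (neg_pos.2 (not_le.1 hc)) hpr
      linarith
    have g0 : γ = 0 := le_antisymm g1 g2
    have := hmin (shift q x y (q y)) ⟨hmem, by rw [hγ, g0, hqm]; ring⟩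
    have := supp_shift_lt hne hx0 hy0 (t := q y) (Or.inr (sub_self _))
    omega
  have hne : (supp q).Nonempty := by
    by_contra hc
    rw [Finset.not_nonempty_iff_eq_empty, supp, Finset.filter_eq_empty_iff] at hc
    have : ∑ i, q i = 0 := Finset.sum_eq_zero fun i hi => not_not.1 (hc hi)
    linarith [hq.2]
  obtain ⟨x, hx⟩ := hne
  have hx0 : q x ≠ 0 := by simpa [supp] using hx
  have hval : ∀ i ∈ supp q, q i = q x := by
    intro i hi
    have hi0 : q i ≠ 0 := by simpa [supp] using hi
    exact le_antisymm (not_lt.1 (hlt x i hx0 hi0)) (not_lt.1 (hlt i x hi0 hx0))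
  have hpow : ∀ k : ℕ, k ≠ 0 → ∑ i, q i ^ k = (supp q).card * q x ^ k := by
    intro k hk
    rw [← Finset.sum_subset (Finset.subset_univ (supp q))]
    · rw [Finset.sum_congr rfl fun i hi => by rw [hval i hi]]
      simp
    · intro i _ hi
      have : q i = 0 := by simpa [supp] using hi
      simp [this, hk]
  have hk : 1 ≤ (supp q).card := Finset.card_pos.2 ⟨x, hx⟩
  have hk0 : ((supp q).card : ℝ) ≠ 0 := by positivity
  have h1 : ((supp q).card : ℝ) * q x = 1 := by
    have := hpow 1 one_ne_zero
    simp only [pow_one] at this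
    rw [← this]; exact hq.2
  have hxv : q x = 1 / (supp q).card := by field_simp; linarith
  calc powerPoly p ≤ powerPoly q := hle p hp
    _ = (((supp q).card : ℝ) - 1) * ((supp q).card - 2) / ((supp q).card) ^ 3 := by
      rw [powerPoly, hpow 2 two_ne_zero, hpow 3 three_ne_zero, hpow 4 four_ne_zero, hxv]
      field_simp
      ring
    _ ≤ 12 / 125 := equal_parts_bound _ hk

end weights

/-! ### Symmetrization -/

/-- The pattern of an ordered quadruple whose only related pair is the first one. -/
def Pat {ι : Type*} (R : ι → ι → Prop) (a b c d : ι) : Prop :=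
  R a b ∧ ¬ R a c ∧ ¬ R a d ∧ ¬ R b c ∧ ¬ R b d ∧ ¬ R c d

/-- The probability that four independent samples from the weights `p` show the pattern `Pat R`. -/
noncomputable def patProb {ι : Type*} [Fintype ι] (R : ι → ι → Prop) (p : ι → ℝ) : ℝ :=
  ∑ c, ∑ d, ∑ a, ∑ b, (if Pat R a b c d then 1 else 0) * (p a * p b * p c * p d)

section symmetrization

variable {ι : Type*} [Fintype ι]

/-- Along the segment that trades mass between two related vertices `x`, `y`, the probability
`patProb` is a quadratic polynomial with nonnegative leading coefficient. -/
lemma patProb_shift {R : ι → ι → Prop} (hrefl : ∀ a, R a a) (hsymm : ∀ a b, R a b → R b a)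
    {p : ι → ℝ} (hp : ∀ i, 0 ≤ p i) {x y : ι} (hxy : R x y) :
    ∃ A B : ℝ, 0 ≤ A ∧ ∀ t, patProb R (shift p x y t) = patProb R p + t * B + t ^ 2 * A := by
  set v : ι → ℝ := fun i => (if i = x then 1 else 0) - (if i = y then 1 else 0) with hv
  set K : ι → ι → ι → ι → ℝ := fun a b c d => if Pat R a b c d then 1 else 0 with hK
  have hv0 : ∀ a, v a ≠ 0 → a = x ∨ a = y := by
    intro a ha
    by_contra hc
    push Not at hc
    exact ha (by simp [hv, hc.1, hc.2])
  have hrel : ∀ a b, v a ≠ 0 → v b ≠ 0 → R a b := by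
    intro a b ha hb
    rcases hv0 a ha with rfl | rfl <;> rcases hv0 b hb with rfl | rfl
    · exact hrefl _
    · exact hxy
    · exact hsymm _ _ hxy
    · exact hrefl _
  have hz : ∀ (P : Prop) (a b : ι), (P → ¬ R a b) →
      (if P then (1 : ℝ) else 0) * (v a * v b) = 0 := by
    intro P a b hP
    by_cases h : P
    · by_cases ha : v a = 0
      · simp [ha]
      by_cases hb : v b = 0
      · simp [hb]
      exact absurd (hrel a b ha hb) (hP h)
    · simp [h]
  refine ⟨∑ c, ∑ d, ∑ a, ∑ b, K a b c d * (v a * v b * p c * p d),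
    ∑ c, ∑ d, ∑ a, ∑ b, K a b c d * (v a * p b * p c * p d + p a * v b * p c * p d
      + p a * p b * v c * p d + p a * p b * p c * v d), ?_, ?_⟩
  · refine Finset.sum_nonneg fun c _ => Finset.sum_nonneg fun d _ => ?_
    -- for fixed `c`, `d` the inner double sum is a nonnegative multiple of a square
    set u : ι → ℝ := fun a => if ¬ R a c ∧ ¬ R a d then 1 else 0 with hu
    set w : ℝ := if ¬ R c d then 1 else 0 with hw
    have hw0 : 0 ≤ w := by rw [hw]; split_ifs <;> norm_num
    have : ∑ a, ∑ b, K a b c d * (v a * v b * p c * p d)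
        = w * (p c * p d) * ((∑ a, u a * v a) * (∑ b, u b * v b)) := by
      rw [Finset.sum_mul_sum, Finset.mul_sum]
      refine Finset.sum_congr rfl fun a _ => ?_
      rw [Finset.mul_sum]
      refine Finset.sum_congr rfl fun b _ => ?_
      by_cases ha : v a = 0
      · simp [ha]
      by_cases hb : v b = 0
      · simp [hb]
      have hKe : K a b c d = w * u a * u b := by
        have := hrel a b ha hb
        simp only [hK, hw, hu, Pat]
        by_cases h1 : R a c <;> by_cases h2 : R a d <;> by_cases h3 : R b c <;>
          by_cases h4 : R b d <;> by_cases h5 : R c d <;> simp [*]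
      rw [hKe]; ring
    rw [this]
    exact mul_nonneg (mul_nonneg hw0 (mul_nonneg (hp c) (hp d))) (mul_self_nonneg _)
  · intro t
    simp only [patProb, Finset.mul_sum, ← Finset.sum_add_distrib]
    refine Finset.sum_congr rfl fun c _ => Finset.sum_congr rfl fun d _ =>
      Finset.sum_congr rfl fun a _ => Finset.sum_congr rfl fun b _ => ?_
    have h1 : K a b c d * (v a * v c) = 0 := hz _ a c fun h => h.2.1
    have h2 : K a b c d * (v a * v d) = 0 := hz _ a d fun h => h.2.2.1
    have h3 : K a b c d * (v b * v c) = 0 := hz _ b c fun h => h.2.2.2.1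
    have h4 : K a b c d * (v b * v d) = 0 := hz _ b d fun h => h.2.2.2.2.1
    have h5 : K a b c d * (v c * v d) = 0 := hz _ c d fun h => h.2.2.2.2.2
    change K a b c d * ((p a + t * v a) * (p b + t * v b) * (p c + t * v c) * (p d + t * v d))
      = K a b c d * _ + _ + _
    linear_combination (t ^ 2 * p b * p d + t ^ 3 * v b * p d) * h1
      + (t ^ 2 * p b * p c + t ^ 3 * v b * p c) * h2 + (t ^ 2 * p a * p d) * h3
      + (t ^ 2 * p a * p c) * h4
      + (t ^ 2 * p a * p b + t ^ 3 * v a * p b + t ^ 3 * p a * v b + t ^ 4 * v a * v b) * h5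

/-- On a support without related pairs, `R` acts as equality and inclusion-exclusion expresses
`patProb` through power sums. -/
lemma patProb_eq_powerPoly {R : ι → ι → Prop} (hrefl : ∀ a, R a a) {p : ι → ℝ}
    (hp : ∑ i, p i = 1) (hind : ∀ x y, p x ≠ 0 → p y ≠ 0 → R x y → x = y) :
    patProb R p = powerPoly p := by
  have hR : ∀ x y, p x ≠ 0 → p y ≠ 0 → (R x y ↔ x = y) :=
    fun x y hx hy => ⟨hind x y hx hy, fun h => h ▸ hrefl x⟩
  have hterm : ∀ a b c d, (if Pat R a b c d then (1 : ℝ) else 0) * (p a * p b * p c * p d)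
      = if a = b then (p a * p b * p c * p d) * ((1 - if a = c then 1 else 0)
          * (1 - if a = d then 1 else 0) * (1 - if c = d then 1 else 0)) else 0 := by
    intro a b c d
    by_cases ha : p a = 0
    · simp [ha]
    by_cases hb : p b = 0
    · simp [hb]
    by_cases hc : p c = 0
    · simp [hc]
    by_cases hd : p d = 0
    · simp [hd]
    simp only [Pat, hR _ _ ha hb, hR _ _ ha hc, hR _ _ ha hd, hR _ _ hb hc, hR _ _ hb hd,
      hR _ _ hc hd]
    by_cases h1 : a = b
    · subst h1
      by_cases h2 : a = c <;> by_cases h3 : a = d <;> by_cases h4 : c = d <;> simp [h2, h3, h4]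
    · simp [h1]
  simp only [patProb, hterm, Finset.sum_ite_eq, Finset.mem_univ, if_true]
  have hinner : ∀ c d, ∑ a, (p a * p a * p c * p d) * ((1 - if a = c then (1 : ℝ) else 0)
          * (1 - if a = d then 1 else 0) * (1 - if c = d then 1 else 0))
      = ((∑ a, p a ^ 2) * p c * p d - p c ^ 3 * p d - p c * p d ^ 3)
        - if c = d then (∑ a, p a ^ 2) * p c * p d - p c ^ 3 * p d - p c * p d ^ 3 else 0 := by
    intro c d
    have e : ∀ a, (p a * p a * p c * p d) * ((1 - if a = c then (1 : ℝ) else 0)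
          * (1 - if a = d then 1 else 0) * (1 - if c = d then 1 else 0))
        = (1 - if c = d then 1 else 0) * ((p a ^ 2 * p c * p d)
          - (if a = c then p a ^ 2 * p c * p d else 0)
          - (if a = d then p a ^ 2 * p c * p d else 0)) := by
      intro a
      split_ifs <;> first | ring1 | (exfalso; grind)
    simp only [e, ← Finset.mul_sum, Finset.sum_sub_distrib, Finset.sum_ite_eq', Finset.mem_univ,
      if_true, ← Finset.sum_mul]
    by_cases h4 : c = d
    · simp [h4]
    · simp [h4]; ring
  simp only [hinner, Finset.sum_sub_distrib, Finset.sum_ite_eq, Finset.mem_univ, if_true,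
    ← Finset.mul_sum, ← Finset.sum_mul, hp, powerPoly]
  have e3 : ∀ c, (∑ a, p a ^ 2) * p c * p c = (∑ a, p a ^ 2) * p c ^ 2 := fun c => by ring
  have e4 : ∀ c, p c ^ 3 * p c = p c ^ 4 := fun c => by ring
  have e5 : ∀ c, p c * p c ^ 3 = p c ^ 4 := fun c => by ring
  simp only [e3, e4, e5, ← Finset.mul_sum]
  ring

/-- Symmetrization: as long as the support contains two related vertices, one of them can be
emptied into the other without lowering `patProb`, by convexity. -/
lemma patProb_le {R : ι → ι → Prop} (hrefl : ∀ a, R a a) (hsymm : ∀ a b, R a b → R b a) :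
    ∀ (N : ℕ) (p : ι → ℝ), p ∈ stdSimplex ℝ ι → (supp p).card = N → patProb R p ≤ 12 / 125 := by
  intro N
  induction N using Nat.strong_induction_on with
  | _ N ih =>
    intro p hp hN
    by_cases hind : ∀ x y, p x ≠ 0 → p y ≠ 0 → R x y → x = y
    · rw [patProb_eq_powerPoly hrefl hp.2 hind]
      exact powerPoly_le hp
    · push Not at hind
      obtain ⟨x, y, hx, hy, hR, hne⟩ := hind
      obtain ⟨A, B, hA, hAB⟩ := patProb_shift hrefl hsymm hp.1 hR
      have hx0 := hp.1 x
      have hy0 := hp.1 y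
      have hstep : ∀ t, (p x + t = 0 ∨ p y - t = 0) → 0 ≤ p x + t → 0 ≤ p y - t → 0 ≤ t * B →
          patProb R p ≤ 12 / 125 := by
        intro t ht h1 h2 h3
        have := ih _ (hN ▸ supp_shift_lt hne hx hy ht) _ (shift_mem hp hne h1 h2) rfl
        rw [hAB] at this
        have := mul_nonneg (sq_nonneg t) hA
        linarith
      rcases le_total 0 B with hB | hB
      · exact hstep (p y) (Or.inr (sub_self _)) (by linarith) (by linarith) (mul_nonneg hy0 hB)
      · exact hstep (-p x) (Or.inl (add_neg_cancel _)) (by linarith) (by linarith)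
          (by nlinarith)

lemma card_pat_le {n : ℕ} (hn : 0 < n) {R : Fin n → Fin n → Prop} (hrefl : ∀ a, R a a)
    (hsymm : ∀ a b, R a b → R b a) :
    (((univ : Finset (Fin n × Fin n × Fin n × Fin n)).filter
      (fun q => Pat R q.1 q.2.1 q.2.2.1 q.2.2.2)).card : ℝ) ≤ 12 / 125 * (n : ℝ) ^ 4 := by
  have hn' : (0 : ℝ) < n := by exact_mod_cast hn
  have hp : (fun _ => 1 / (n : ℝ) : Fin n → ℝ) ∈ stdSimplex ℝ (Fin n) :=
    ⟨fun _ => by positivity, by simp [hn'.ne']⟩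
  have h := patProb_le hrefl hsymm _ _ hp rfl
  have hcard : (((univ : Finset (Fin n × Fin n × Fin n × Fin n)).filter
      (fun q => Pat R q.1 q.2.1 q.2.2.1 q.2.2.2)).card : ℝ)
      = ∑ c, ∑ d, ∑ a, ∑ b, (if Pat R a b c d then (1 : ℝ) else 0) := by
    rw [Finset.card_filter]
    push_cast
    simp only [Fintype.sum_prod_type]
    have s1 : ∀ a : Fin n, ∑ b, ∑ c, ∑ d, (if Pat R a b c d then (1 : ℝ) else 0)
        = ∑ c, ∑ d, ∑ b, (if Pat R a b c d then (1 : ℝ) else 0) := by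
      intro a
      rw [Finset.sum_comm]
      exact Finset.sum_congr rfl fun c _ => Finset.sum_comm
    simp only [s1]
    rw [Finset.sum_comm]
    exact Finset.sum_congr rfl fun c _ => Finset.sum_comm
  have hprob : patProb R (fun _ => 1 / (n : ℝ))
      = (∑ c, ∑ d, ∑ a, ∑ b, (if Pat R a b c d then (1 : ℝ) else 0)) * (1 / (n : ℝ) ^ 4) := by
    simp only [patProb, Finset.sum_mul]
    refine Finset.sum_congr rfl fun c _ => Finset.sum_congr rfl fun d _ =>
      Finset.sum_congr rfl fun a _ => Finset.sum_congr rfl fun b _ => ?_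
    congr 1
    field_simp
  rw [hprob, ← hcard, mul_one_div, div_le_iff₀ (by positivity)] at h
  exact h

end symmetrization

/-! ### Counting vertex sets by ordered quadruples -/

/-- The reflexive closure of adjacency: two vertices of `G` are related in the clique blow-up. -/
def EqOrAdj {n : ℕ} (G : SimpleGraph (Fin n)) (a b : Fin n) : Prop := a = b ∨ G.Adj a b

section counting

variable {n : ℕ}

lemma eqOrAdj_refl (G : SimpleGraph (Fin n)) (a : Fin n) : EqOrAdj G a a := Or.inl rfl

lemma eqOrAdj_symm (G : SimpleGraph (Fin n)) (a b : Fin n) (h : EqOrAdj G a b) : EqOrAdj G b a :=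
  h.imp Eq.symm fun h => h.symm

lemma edgesOn_eq_one {G : SimpleGraph (Fin n)} {s : Finset (Fin n)} :
    (s.card = 4 ∧ edgesOn G s = 1) ↔
      ∃ a b c d, a ≠ b ∧ Pat (EqOrAdj G) a b c d ∧ s = {a, b, c, d} := by
  constructor
  · rintro ⟨hs, he⟩
    obtain ⟨e, he⟩ := Finset.card_eq_one.1 he
    have hmem : ∀ f, f ∈ (s.powersetCard 2).filter (fun e => ∃ a ∈ e, ∃ b ∈ e, G.Adj a b) ↔
        f = e := by intro f; rw [he, Finset.mem_singleton]
    obtain ⟨h1, a, ha, b, hb, hab⟩ := Finset.mem_filter.1 ((hmem e).2 rfl)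
    obtain ⟨hes, hec⟩ := Finset.mem_powersetCard.1 h1
    have huniq : ∀ u v, u ∈ s → v ∈ s → G.Adj u v → u ∈ e ∧ v ∈ e := by
      intro u v hu hv huv
      have : ({u, v} : Finset (Fin n)) = e := by
        rw [← hmem, Finset.mem_filter, Finset.mem_powersetCard]
        refine ⟨⟨?_, Finset.card_pair huv.ne⟩, u, by simp, v, by simp, huv⟩
        intro w hw
        simp only [Finset.mem_insert, Finset.mem_singleton] at hw
        rcases hw with rfl | rfl <;> assumption
      rw [← this]; simp
    have heq : e = {a, b} := by
      symm
      apply Finset.eq_of_subset_of_card_le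
      · intro w hw
        simp only [Finset.mem_insert, Finset.mem_singleton] at hw
        rcases hw with rfl | rfl <;> assumption
      · rw [hec, Finset.card_pair hab.ne]
    have hsd : (s \ e).card = 2 := by
      rw [Finset.card_sdiff_of_subset hes]; omega
    obtain ⟨c, d, hcd, hcd'⟩ := Finset.card_eq_two.1 hsd
    have hc : c ∈ s \ e := by rw [hcd']; simp
    have hd : d ∈ s \ e := by rw [hcd']; simp
    rw [Finset.mem_sdiff] at hc hd
    have hno : ∀ u v, u ∈ s → v ∈ s → v ∉ e → u ≠ v → ¬ EqOrAdj G u v := by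
      rintro u v hu hv hve huv (h | h)
      · exact huv h
      · exact hve (huniq u v hu hv h).2
    refine ⟨a, b, c, d, hab.ne, ⟨Or.inr hab, ?_, ?_, ?_, ?_, ?_⟩, ?_⟩
    · exact hno a c (hes ha) hc.1 hc.2 fun h => hc.2 (h ▸ ha)
    · exact hno a d (hes ha) hd.1 hd.2 fun h => hd.2 (h ▸ ha)
    · exact hno b c (hes hb) hc.1 hc.2 fun h => hc.2 (h ▸ hb)
    · exact hno b d (hes hb) hd.1 hd.2 fun h => hd.2 (h ▸ hb)
    · exact hno c d hc.1 hd.1 hd.2 hcd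
    · rw [← Finset.union_sdiff_of_subset hes, hcd', heq]
      ext w; simp only [Finset.mem_union, Finset.mem_insert, Finset.mem_singleton]; tauto
  · rintro ⟨a, b, c, d, hab, ⟨h1, h2, h3, h4, h5, h6⟩, rfl⟩
    simp only [EqOrAdj, not_or, hab, false_or] at h1 h2 h3 h4 h5 h6
    constructor
    · rw [Finset.card_insert_of_notMem, Finset.card_insert_of_notMem, Finset.card_pair h6.1]
      · simp [h4.1, h5.1]
      · simp [hab, h2.1, h3.1]
    · rw [edgesOn, Finset.card_eq_one]
      refine ⟨{a, b}, ?_⟩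
      have hadj : ∀ u v, u ∈ ({a, b, c, d} : Finset (Fin n)) →
          v ∈ ({a, b, c, d} : Finset (Fin n)) → G.Adj u v →
          (u = a ∧ v = b) ∨ (u = b ∧ v = a) := by
        intro u v hu hv huv
        have := huv.ne
        have := huv.symm
        simp only [Finset.mem_insert, Finset.mem_singleton] at hu hv
        rcases hu with rfl | rfl | rfl | rfl <;> rcases hv with rfl | rfl | rfl | rfl <;>
          simp_all
      ext f
      rw [Finset.mem_filter, Finset.mem_powersetCard, Finset.mem_singleton]
      constructor
      · rintro ⟨⟨hf, hfc⟩, u, hu, v, hv, huv⟩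
        symm
        apply Finset.eq_of_subset_of_card_le
        · intro w hw
          simp only [Finset.mem_insert, Finset.mem_singleton] at hw
          rcases hadj u v (hf hu) (hf hv) huv with ⟨rfl, rfl⟩ | ⟨rfl, rfl⟩ <;>
            rcases hw with rfl | rfl <;> assumption
        · rw [hfc, Finset.card_pair hab]
      · rintro rfl
        refine ⟨⟨?_, Finset.card_pair hab⟩, a, by simp, b, by simp, h1⟩
        intro w hw
        simp only [Finset.mem_insert, Finset.mem_singleton] at hw ⊢
        tauto

/-- A pattern on a given four-point set is determined up to swapping the related pair and
swapping the two remaining points. -/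
lemma pat_unique {ι : Type*} {R : ι → ι → Prop} (hrefl : ∀ a, R a a)
    (hsymm : ∀ a b, R a b → R b a) {a b c d a' b' c' d' : ι} (h : Pat R a b c d)
    (k : Pat R a' b' c' d') (hne : a' ≠ b')
    (ha : a' = a ∨ a' = b ∨ a' = c ∨ a' = d) (hb : b' = a ∨ b' = b ∨ b' = c ∨ b' = d)
    (hc : c' = a ∨ c' = b ∨ c' = c ∨ c' = d) (hd : d' = a ∨ d' = b ∨ d' = c ∨ d' = d) :
    (a' = a ∧ b' = b ∧ c' = c ∧ d' = d) ∨ (a' = b ∧ b' = a ∧ c' = c ∧ d' = d) ∨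
      (a' = a ∧ b' = b ∧ c' = d ∧ d' = c) ∨ (a' = b ∧ b' = a ∧ c' = d ∧ d' = c) := by
  obtain ⟨h1, h2, h3, h4, h5, h6⟩ := h
  obtain ⟨k1, k2, k3, -, -, k6⟩ := k
  have h1' := hsymm _ _ h1
  have h2' := mt (hsymm c a) h2
  have h3' := mt (hsymm d a) h3
  have h4' := mt (hsymm c b) h4
  have h5' := mt (hsymm d b) h5
  have h6' := mt (hsymm d c) h6
  have ra := hrefl a
  have rb := hrefl b
  have hab : (a' = a ∧ b' = b) ∨ (a' = b ∧ b' = a) := by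
    rcases ha with rfl | rfl | rfl | rfl <;> rcases hb with rfl | rfl | rfl | rfl <;>
      first | exact Or.inl ⟨rfl, rfl⟩ | exact Or.inr ⟨rfl, rfl⟩ | exact absurd rfl hne
            | contradiction
  have hc' : c' = c ∨ c' = d := by
    rcases hc with rfl | rfl | h | h
    · rcases hab with ⟨rfl, rfl⟩ | ⟨rfl, rfl⟩ <;> contradiction
    · rcases hab with ⟨rfl, rfl⟩ | ⟨rfl, rfl⟩ <;> contradiction
    · exact Or.inl h
    · exact Or.inr h
  have hd' : d' = c ∨ d' = d := by
    rcases hd with rfl | rfl | h | h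
    · rcases hab with ⟨rfl, rfl⟩ | ⟨rfl, rfl⟩ <;> contradiction
    · rcases hab with ⟨rfl, rfl⟩ | ⟨rfl, rfl⟩ <;> contradiction
    · exact Or.inl h
    · exact Or.inr h
  have hcd : c' ≠ d' := fun h => k6 (h ▸ hrefl c')
  have hcd' : (c' = c ∧ d' = d) ∨ (c' = d ∧ d' = c) := by
    rcases hc' with h | h <;> rcases hd' with h' | h'
    · exact absurd (h.trans h'.symm) hcd
    · exact Or.inl ⟨h, h'⟩
    · exact Or.inr ⟨h, h'⟩
    · exact absurd (h.trans h'.symm) hcd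
  clear * - hab hcd'
  tauto

lemma Pat.swap_left {ι : Type*} {R : ι → ι → Prop} (hsymm : ∀ a b, R a b → R b a)
    {a b c d : ι} (h : Pat R a b c d) : Pat R b a c d :=
  ⟨hsymm _ _ h.1, h.2.2.2.1, h.2.2.2.2.1, h.2.1, h.2.2.1, h.2.2.2.2.2⟩

lemma Pat.swap_right {ι : Type*} {R : ι → ι → Prop} (hsymm : ∀ a b, R a b → R b a)
    {a b c d : ι} (h : Pat R a b c d) : Pat R a b d c :=
  ⟨h.1, h.2.2.1, h.2.1, h.2.2.2.2.1, h.2.2.2.1, fun k => h.2.2.2.2.2 (hsymm _ _ k)⟩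

/-- Each vertex set with exactly one edge arises from four ordered quadruples: the ends of the
edge and the two isolated vertices can be swapped independently. -/
lemma card_quadruples (G : SimpleGraph (Fin n)) :
    ((univ : Finset (Fin n × Fin n × Fin n × Fin n)).filter
      (fun q => q.1 ≠ q.2.1 ∧ Pat (EqOrAdj G) q.1 q.2.1 q.2.2.1 q.2.2.2)).card
      = klCount G 4 1 * 4 := by
  rw [klCount]
  have hmaps : ∀ q ∈ (univ : Finset (Fin n × Fin n × Fin n × Fin n)).filter
      (fun q => q.1 ≠ q.2.1 ∧ Pat (EqOrAdj G) q.1 q.2.1 q.2.2.1 q.2.2.2),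
      ({q.1, q.2.1, q.2.2.1, q.2.2.2} : Finset (Fin n)) ∈
        (univ.powersetCard 4).filter (fun s => edgesOn G s = 1) := by
    intro q hq
    simp only [Finset.mem_filter, Finset.mem_univ, true_and] at hq
    rw [Finset.mem_filter, Finset.mem_powersetCard]
    have := edgesOn_eq_one.2 ⟨_, _, _, _, hq.1, hq.2, rfl⟩
    exact ⟨⟨Finset.subset_univ _, this.1⟩, this.2⟩
  rw [Finset.card_eq_sum_card_fiberwise hmaps, Finset.sum_const_nat]
  intro s hs
  rw [Finset.mem_filter, Finset.mem_powersetCard] at hs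
  obtain ⟨a, b, c, d, hab, hP, rfl⟩ := edgesOn_eq_one.1 ⟨hs.1.2, hs.2⟩
  have : (((univ : Finset (Fin n × Fin n × Fin n × Fin n)).filter
      (fun q => q.1 ≠ q.2.1 ∧ Pat (EqOrAdj G) q.1 q.2.1 q.2.2.1 q.2.2.2)).filter
      (fun q => ({q.1, q.2.1, q.2.2.1, q.2.2.2} : Finset (Fin n)) = {a, b, c, d}))
      = {(a, b, c, d), (b, a, c, d), (a, b, d, c), (b, a, d, c)} := by
    ext ⟨a', b', c', d'⟩
    simp only [Finset.mem_filter, Finset.mem_univ, true_and, Finset.mem_insert,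
      Finset.mem_singleton, Prod.mk.injEq]
    constructor
    · rintro ⟨⟨hne, hP'⟩, hset⟩
      refine pat_unique (eqOrAdj_refl G) (eqOrAdj_symm G)
        hP hP' hne ?_ ?_ ?_ ?_ <;> rw [← Finset.mem_singleton (a := d)] <;>
        simp only [← Finset.mem_insert] <;> rw [← hset] <;> simp
    · have hs' := eqOrAdj_symm G
      rintro (⟨rfl, rfl, rfl, rfl⟩ | ⟨rfl, rfl, rfl, rfl⟩ | ⟨rfl, rfl, rfl, rfl⟩ |
        ⟨rfl, rfl, rfl, rfl⟩)
      · exact ⟨⟨hab, hP⟩, rfl⟩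
      · exact ⟨⟨hab.symm, hP.swap_left hs'⟩, Finset.insert_comm _ _ _⟩
      · exact ⟨⟨hab, hP.swap_right hs'⟩, by rw [Finset.pair_comm]⟩
      · exact ⟨⟨hab.symm, (hP.swap_left hs').swap_right hs'⟩,
          by rw [Finset.insert_comm, Finset.pair_comm c']⟩
  rw [this]
  have hcd : c ≠ d := fun h => hP.2.2.2.2.2 (Or.inl h)
  rw [Finset.card_insert_of_notMem, Finset.card_insert_of_notMem, Finset.card_pair]
  · simp [hab]
  · simp [hab, hcd]
  · simp [hab, hcd]

lemma klCount_le (hn : 0 < n) (G : SimpleGraph (Fin n)) :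
    (klCount G 4 1 : ℝ) ≤ 3 / 125 * (n : ℝ) ^ 4 := by
  have h := card_pat_le hn (R := EqOrAdj G) (eqOrAdj_refl G) (eqOrAdj_symm G)
  have hsub : (klCount G 4 1 * 4 : ℕ) ≤ ((univ : Finset (Fin n × Fin n × Fin n × Fin n)).filter
      (fun q => Pat (EqOrAdj G) q.1 q.2.1 q.2.2.1 q.2.2.2)).card := by
    rw [← card_quadruples]
    exact Finset.card_le_card (Finset.monotone_filter_right _ fun q _ hq => hq.2)
  have : ((klCount G 4 1 * 4 : ℕ) : ℝ) ≤ _ := Nat.cast_le.2 hsub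
  push_cast at this
  linarith

/-- The disjoint union of five cliques, given by the residue classes modulo `5`. -/
def fiveCliques (n : ℕ) : SimpleGraph (Fin n) where
  Adj a b := a ≠ b ∧ (a : ℕ) % 5 = (b : ℕ) % 5
  symm := ⟨fun _ _ h => ⟨h.1.symm, h.2.symm⟩⟩
  loopless := ⟨fun _ h => h.1 rfl⟩

/-- Quadruples are produced by choosing three distinct residues modulo `5` and quotients below
`m`, the first residue serving for two vertices. -/
lemma fiveCliques_count {m : ℕ} (h : 5 * m ≤ n) :
    15 * (m * m - m) * (m * m) ≤ klCount (fiveCliques n) 4 1 := by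
  let I : Finset (Fin 5 × Fin 5 × Fin 5) :=
    univ.filter (fun i => i.1 ≠ i.2.1 ∧ i.1 ≠ i.2.2 ∧ i.2.1 ≠ i.2.2)
  have hI : I.card = 60 := by
    -- `I` carries the classical decidability instance; the count is evaluated with a computable one
    have : ∀ inst : DecidablePred (fun i : Fin 5 × Fin 5 × Fin 5 =>
        i.1 ≠ i.2.1 ∧ i.1 ≠ i.2.2 ∧ i.2.1 ≠ i.2.2),
        (@Finset.filter _ (fun i : Fin 5 × Fin 5 × Fin 5 =>
        i.1 ≠ i.2.1 ∧ i.1 ≠ i.2.2 ∧ i.2.1 ≠ i.2.2) inst univ).card = 60 := by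
      intro inst
      rw [Subsingleton.elim inst (fun i => instDecidableAnd (dp := instDecidableNot)
        (dq := instDecidableAnd (dp := instDecidableNot) (dq := instDecidableNot)))]
      decide
    convert this _
  let f : (Fin 5 × Fin 5 × Fin 5) × (Fin m × Fin m) × (Fin m × Fin m) →
      Fin n × Fin n × Fin n × Fin n := fun z =>
    (⟨5 * z.2.1.1 + z.1.1, by omega⟩, ⟨5 * z.2.1.2 + z.1.1, by omega⟩,
      ⟨5 * z.2.2.1 + z.1.2.1, by omega⟩, ⟨5 * z.2.2.2 + z.1.2.2, by omega⟩)
  have hle := Finset.card_le_card_of_injOn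
    (s := I ×ˢ (univ : Finset (Fin m)).offDiag ×ˢ (univ : Finset (Fin m × Fin m)))
    (t := (univ : Finset (Fin n × Fin n × Fin n × Fin n)).filter
      (fun q => q.1 ≠ q.2.1 ∧ Pat (EqOrAdj (fiveCliques n)) q.1 q.2.1 q.2.2.1 q.2.2.2)) f ?_ ?_
  · rw [card_quadruples, Finset.card_product, Finset.card_product, Finset.offDiag_card, hI] at hle
    simp only [Finset.card_univ, Fintype.card_prod, Fintype.card_fin] at hle
    nlinarith
  · rintro ⟨⟨i, j, k⟩, ⟨u, v⟩, ⟨w, z⟩⟩ hx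
    simp only [I, Finset.coe_product, Set.mem_prod, Finset.mem_coe, Finset.mem_filter,
      Finset.mem_univ, true_and, Finset.mem_offDiag, and_true, ne_eq, Fin.ext_iff] at hx
    simp only [f, Finset.coe_filter, Finset.mem_univ, true_and, Set.mem_ofPred_eq, Pat, EqOrAdj,
      fiveCliques, ne_eq, Fin.ext_iff]
    omega
  · rintro ⟨⟨i, j, k⟩, ⟨u, v⟩, ⟨w, z⟩⟩ _ ⟨⟨i', j', k'⟩, ⟨u', v'⟩, ⟨w', z'⟩⟩ _ hx
    simp only [f, Prod.mk.injEq, Fin.ext_iff] at hx ⊢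
    omega

end counting

/-! ### The limit -/

lemma choose_four_eq (n : ℕ) :
    (n.choose 4 : ℝ) = (n : ℝ) * (n - 1) * (n - 2) * (n - 3) / 24 := by
  rw [Nat.cast_choose_eq_descPochhammer_div]
  simp [descPochhammer_succ_right, Nat.factorial]

/-- The maximal `(4,1)`-density over graphs on `n ≥ 4` vertices tends to `72/125`. -/
theorem edgeInducibility_four_one (M : ℕ → ℝ)
    (hM : ∀ n, 4 ≤ n →
      IsGreatest {d : ℝ | ∃ G : SimpleGraph (Fin n), d = klDensity G 4 1} (M n)) :
    Tendsto M atTop (𝓝 (72 / 125 : ℝ)) := by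
  have hinv : Tendsto (fun n : ℕ => (n : ℝ)⁻¹) atTop (𝓝 0) := tendsto_inv_atTop_nhds_zero_nat
  have hlow : Tendsto (fun n : ℕ => (72 / 125 : ℝ) * (1 - 4 * (n : ℝ)⁻¹) ^ 3
      * (1 - 9 * (n : ℝ)⁻¹)) atTop (𝓝 (72 / 125)) := by
    have hc : Continuous fun x : ℝ => (72 / 125 : ℝ) * (1 - 4 * x) ^ 3 * (1 - 9 * x) := by
      fun_prop
    simpa [Function.comp_def] using (hc.tendsto 0).comp hinv
  have hupp : Tendsto (fun n : ℕ => (72 / 125 : ℝ)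
      / ((1 - (n : ℝ)⁻¹) * (1 - 2 * (n : ℝ)⁻¹) * (1 - 3 * (n : ℝ)⁻¹))) atTop (𝓝 (72 / 125)) := by
    have hc : ContinuousAt (fun x : ℝ => (72 / 125 : ℝ)
        / ((1 - x) * (1 - 2 * x) * (1 - 3 * x))) 0 :=
      ContinuousAt.div (by fun_prop) (by fun_prop) (by norm_num)
    simpa [Function.comp_def] using hc.tendsto.comp hinv
  refine tendsto_of_tendsto_of_tendsto_of_le_of_le' hlow hupp ?_ ?_
  · filter_upwards [eventually_ge_atTop 9] with n hn
    have hn' : (9 : ℝ) ≤ n := by exact_mod_cast hn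
    have hpos : (0 : ℝ) < n := by linarith
    refine le_trans ?_ ((hM n (by omega)).2 ⟨fiveCliques n, rfl⟩)
    have hcount := fiveCliques_count (n := n) (m := n / 5) (by omega)
    have hcR : 15 * (((n / 5 : ℕ) : ℝ) * (n / 5 : ℕ) - (n / 5 : ℕ))
        * (((n / 5 : ℕ) : ℝ) * (n / 5 : ℕ)) ≤ klCount (fiveCliques n) 4 1 := by
      have : ((15 * ((n / 5) * (n / 5) - n / 5) * ((n / 5) * (n / 5)) : ℕ) : ℝ) ≤ _ :=
        Nat.cast_le.2 hcount
      rw [Nat.cast_mul, Nat.cast_mul, Nat.cast_sub (Nat.le_mul_self _)] at this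
      push_cast at this ⊢
      exact this
    have hm : ((n : ℝ) - 4) / 5 ≤ (n / 5 : ℕ) := by
      have : n ≤ 5 * (n / 5) + 4 := by omega
      have : (n : ℝ) ≤ 5 * (n / 5 : ℕ) + 4 := by exact_mod_cast this
      linarith
    set m : ℝ := ((n / 5 : ℕ) : ℝ)
    have h1 : 15 * (((n : ℝ) - 4) / 5) ^ 3 * (((n : ℝ) - 9) / 5) ≤ 15 * m ^ 3 * (m - 1) := by
      have : ((n : ℝ) - 9) / 5 ≤ m - 1 := by linarith
      have h0 : (0 : ℝ) ≤ ((n : ℝ) - 4) / 5 := by linarith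
      have h9 : (0 : ℝ) ≤ ((n : ℝ) - 9) / 5 := by linarith
      gcongr
    have hch : (n.choose 4 : ℝ) ≤ (n : ℝ) ^ 4 / 24 := by
      rw [choose_four_eq]
      have : (n : ℝ) * (n - 1) * (n - 2) * (n - 3) ≤ n * n * n * n := by
        gcongr <;> linarith
      linarith [this, show (n : ℝ) * n * n * n = (n : ℝ) ^ 4 by ring]
    have hch0 : (0 : ℝ) < n.choose 4 := by exact_mod_cast Nat.choose_pos (by omega)
    rw [klDensity, le_div_iff₀ hch0]
    have hnn : 0 ≤ (72 / 125 : ℝ) * (1 - 4 * (n : ℝ)⁻¹) ^ 3 * (1 - 9 * (n : ℝ)⁻¹) := by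
      have : 9 * (n : ℝ)⁻¹ ≤ 1 := by
        rw [← div_eq_mul_inv]; exact (div_le_one hpos).2 hn'
      have : (0 : ℝ) ≤ (n : ℝ)⁻¹ := by positivity
      exact mul_nonneg (mul_nonneg (by norm_num) (pow_nonneg (by linarith) 3)) (by linarith)
    calc _ ≤ (72 / 125 : ℝ) * (1 - 4 * (n : ℝ)⁻¹) ^ 3 * (1 - 9 * (n : ℝ)⁻¹)
          * ((n : ℝ) ^ 4 / 24) := mul_le_mul_of_nonneg_left hch hnn
      _ = 15 * (((n : ℝ) - 4) / 5) ^ 3 * (((n : ℝ) - 9) / 5) := by field_simp; ring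
      _ ≤ _ := h1
      _ = 15 * (m * m - m) * (m * m) := by ring
      _ ≤ _ := hcR
  · filter_upwards [eventually_ge_atTop 4] with n hn
    have hn' : (4 : ℝ) ≤ n := by exact_mod_cast hn
    obtain ⟨⟨G, hG⟩, -⟩ := hM n hn
    have h1 : (0 : ℝ) < n - 1 := by linarith
    have h2 : (0 : ℝ) < n - 2 := by linarith
    have h3 : (0 : ℝ) < n - 3 := by linarith
    have h0 : (0 : ℝ) < n := by linarith
    have hch0 : (0 : ℝ) < n.choose 4 := by exact_mod_cast Nat.choose_pos hn
    rw [hG, klDensity]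
    calc (klCount G 4 1 : ℝ) / n.choose 4
        ≤ (3 / 125 * (n : ℝ) ^ 4) / n.choose 4 := by
          gcongr
          exact klCount_le (by omega) G
      _ = _ := by
          rw [choose_four_eq]
          have e1 : 1 - (n : ℝ)⁻¹ = (n - 1) / n := by field_simp
          have e2 : 1 - 2 * (n : ℝ)⁻¹ = (n - 2) / n := by field_simp
          have e3 : 1 - 3 * (n : ℝ)⁻¹ = (n - 3) / n := by field_simp
          rw [e1, e2, e3]
          field_simp
          ring
end

section
/- Let M(n) denote the maximum, over all simple graphs G on n vertices (n ≥ 4), of the (4,2)-density d_{4,2}(G). Then M(n) converges as n → ∞ and its limit equals 1/2. -/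
/-!
*Upper bound.* Count ordered 4-tuples of vertices (repetitions allowed) with exactly two adjacent
pairs; there are at most `n ^ 4 / 2` of them (`two_sum_le`). The proof is a sum of squares on five
vertices. For a labelled triple `(x, y, z)` inducing no edge, the edge `yz`, or the path `y - x - z`,
give every further vertex `w` two or three integer weights depending only on its adjacencies to
`x, y, z`, and take a positive semidefinite quadratic form in the sums of these weights over all `w`.
Expanded, the form is a sum over pairs `(w, t)` of the function `kern`, and it is nonnegative
(`kern_sum_nonneg`). The weights and forms are a rational flag algebra certificate: on every graph
on five vertices, the average over relabellings of `kern`, plus `240` times the excess over `1/2` of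
the density of 4-subsets with two edges, is at most `0` (`symSum_gain_nonpos`, a finite check on ten
Boolean variables). Any 5-tuple of vertices pulls `G` back to a graph on five vertices, so summing
over all 5-tuples leaves no error term.

*Lower bound.* Colour `i < n` by `i % 6` and join two vertices when their colours are adjacent in two
disjoint triangles. Of the `6 ^ 4 = 1296` colourings of a 4-tuple exactly `648` give two edges, so
about half of all 4-tuples do.

Injective tuples with two adjacent pairs number `24 * klCount G 4 2` (`klCount_mul`), and all but
`O(n ^ 3)` tuples are injective, so both bounds tend to `1 / 2` after division by
`24 * n.choose 4 ~ n ^ 4`.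
-/

open Finset Filter
open scoped Classical Topology

/-! ### The weights and the quadratic forms -/

/-! In `u₀`, …, `q₂` the three arguments say whether the vertex `w` is adjacent to `x`, `y`, `z`, in
this order. The weights are symmetric under exchanging `y` and `z`. -/

/-- First weight of a vertex over a triple inducing no edge. -/
def u₀ : Bool → Bool → Bool → ℤ
  | false, false, false => 1
  | true, true, true => -2
  | true, true, false => -1
  | true, false, true => -1
  | false, true, true => -1
  | _, _, _ => 0

/-- Second weight of a vertex over a triple inducing no edge. -/
def u₁ : Bool → Bool → Bool → ℤ
  | true, false, false => 1
  | false, true, false => 1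
  | false, false, true => 1
  | true, true, false => -1
  | true, false, true => -1
  | false, true, true => -1
  | _, _, _ => 0

/-- First weight of a vertex over a triple inducing only the edge `yz`. -/
def e₀ : Bool → Bool → Bool → ℤ
  | false, false, false => 2
  | true, false, false => -1
  | _, _, _ => 0

/-- Second weight of a vertex over a triple inducing only the edge `yz`. -/
def e₁ : Bool → Bool → Bool → ℤ
  | false, true, true => 1
  | false, false, false => -1
  | _, _, _ => 0

/-- Third weight of a vertex over a triple inducing only the edge `yz`. -/
def e₂ : Bool → Bool → Bool → ℤ
  | false, true, false => 1
  | false, false, true => 1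
  | false, false, false => -2
  | _, _, _ => 0

/-- First weight of a vertex over a triple inducing the path `y - x - z`. -/
def q₀ : Bool → Bool → Bool → ℤ
  | true, false, false => 6
  | false, true, true => -6
  | true, true, false => 1
  | true, false, true => 1
  | false, true, false => 1
  | false, false, true => 1
  | _, _, _ => 0

/-- Second weight of a vertex over a triple inducing the path `y - x - z`. -/
def q₁ : Bool → Bool → Bool → ℤ
  | true, true, true => 3
  | false, true, true => -3
  | true, true, false => 1
  | true, false, true => 1
  | false, true, false => 1
  | false, false, true => 1
  | _, _, _ => 0

/-- Third weight of a vertex over a triple inducing the path `y - x - z`. -/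
def q₂ : Bool → Bool → Bool → ℤ
  | false, true, true => 3
  | false, false, false => -1
  | _, _, _ => 0

/-- The contribution of the pair `(w, t)` to the quadratic form of the triple `(x, y, z)`. The first
three arguments are the adjacencies `xy`, `xz`, `yz`, followed by those of `w`, then of `t`, to
`x, y, z`. Triples inducing any other labelled graph contribute nothing. -/
def kern : Bool → Bool → Bool → Bool → Bool → Bool → Bool → Bool → Bool → ℤ
  | false, false, false, a, b, c, a', b', c' =>
      120 * (u₀ a b c * u₀ a' b' c') - 96 * (u₀ a b c * u₁ a' b' c')
        - 96 * (u₁ a b c * u₀ a' b' c') + 120 * (u₁ a b c * u₁ a' b' c')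
  | false, false, true, a, b, c, a', b', c' =>
      1368 * (e₀ a b c * e₀ a' b' c') + 804 * (e₀ a b c * e₁ a' b' c')
        + 372 * (e₀ a b c * e₂ a' b' c') + 804 * (e₁ a b c * e₀ a' b' c')
        + 600 * (e₁ a b c * e₁ a' b' c') + 294 * (e₁ a b c * e₂ a' b' c')
        + 372 * (e₂ a b c * e₀ a' b' c') + 294 * (e₂ a b c * e₁ a' b' c')
        + 150 * (e₂ a b c * e₂ a' b' c')
  | true, true, false, a, b, c, a', b', c' =>
      30 * (q₀ a b c * q₀ a' b' c') + 20 * (q₀ a b c * q₁ a' b' c')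
        + 13 * (q₀ a b c * q₂ a' b' c') + 20 * (q₁ a b c * q₀ a' b' c')
        + 120 * (q₁ a b c * q₁ a' b' c') + 200 * (q₁ a b c * q₂ a' b' c')
        + 13 * (q₂ a b c * q₀ a' b' c') + 200 * (q₂ a b c * q₁ a' b' c')
        + 480 * (q₂ a b c * q₂ a' b' c')
  | _, _, _, _, _, _, _, _, _ => 0

/-- The indicator that exactly two of the six pairs of a 4-tuple are adjacent. -/
def two (b₁ b₂ b₃ b₄ b₅ b₆ : Bool) : ℤ :=
  if b₁.toNat + b₂.toNat + b₃.toNat + b₄.toNat + b₅.toNat + b₆.toNat = 2 then 1 else 0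

/-- The sum of `kern` over all pairs `(w, t)` is a quadratic form in the total weights, with Gram
matrix `(120, -96; -96, 120)`, `(1368, 804, 372; 804, 600, 294; 372, 294, 150)` or
`(30, 20, 13; 20, 120, 200; 13, 200, 480)`, each positive definite. -/
theorem kern_sum_nonneg {V : Type*} [Fintype V] (t₁ t₂ t₃ : Bool) (a b c : V → Bool) :
    0 ≤ ∑ w, ∑ t, kern t₁ t₂ t₃ (a w) (b w) (c w) (a t) (b t) (c t) := by
  have key : ∀ (k : ℤ) (F G : V → ℤ),
      ∑ w, ∑ t, k * (F w * G t) = k * ((∑ w, F w) * ∑ w, G w) := fun k F G => by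
    simp only [← Finset.mul_sum, ← Finset.sum_mul]
  cases t₁ <;> cases t₂ <;> cases t₃ <;>
    simp only [kern, Finset.sum_add_distrib, Finset.sum_sub_distrib, key,
      Finset.sum_const_zero, le_refl]
  -- The squares come from completing squares in each form, scaled to be integral.
  · generalize (∑ w, u₀ (a w) (b w) (c w)) = p
    generalize (∑ w, u₁ (a w) (b w) (c w)) = q
    nlinarith [sq_nonneg (5 * p - 4 * q), sq_nonneg q]
  · generalize (∑ w, e₀ (a w) (b w) (c w)) = p
    generalize (∑ w, e₁ (a w) (b w) (c w)) = q
    generalize (∑ w, e₂ (a w) (b w) (c w)) = r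
    nlinarith [sq_nonneg (1368 * p + 804 * q + 372 * r),
      sq_nonneg (174384 * q + 103104 * r), sq_nonneg r]
  · generalize (∑ w, q₀ (a w) (b w) (c w)) = p
    generalize (∑ w, q₁ (a w) (b w) (c w)) = q
    generalize (∑ w, q₂ (a w) (b w) (c w)) = r
    nlinarith [sq_nonneg (30 * p + 20 * q + 13 * r), sq_nonneg (3200 * q + 5740 * r), sq_nonneg r]

/-! ### The upper bound on tuples -/

/-- `kern` plus `120` times the excess of `two` over `1 / 2`, for each of the tuples `(x, y, z, w)`
and `(x, y, z, t)`. Using both tuples makes this symmetric in `w` and `t`. -/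
def gain {V : Type*} (A : V → V → Bool) (x y z w t : V) : ℤ :=
  120 * two (A x y) (A x z) (A y z) (A w x) (A w y) (A w z)
    + 120 * two (A x y) (A x z) (A y z) (A t x) (A t y) (A t z) - 120
    + kern (A x y) (A x z) (A y z) (A w x) (A w y) (A w z) (A t x) (A t y) (A t z)

/-- The sum of `f x y z w t` over the splittings of `{p, q, r, s}` into pairs `{y, z}` and
`{w, t}`, taken once for each unordered choice. -/
def pairSum {V : Type*} (f : V → V → V → V → V → ℤ) (x p q r s : V) : ℤ :=
  f x p q r s + f x p r q s + f x p s q r + f x q r p s + f x q s p r + f x r s p q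

/-- The sum of `f x y z w t` over the 30 ways to assign `a, b, c, d, e` to the positions, up to
exchanging `y` with `z` and `w` with `t`. -/
def symSum {V : Type*} (f : V → V → V → V → V → ℤ) (a b c d e : V) : ℤ :=
  pairSum f a b c d e + pairSum f b a c d e + pairSum f c a b d e + pairSum f d a b c e
    + pairSum f e a b c d

/-- The flag algebra certificate: the symmetrised `gain` is nonpositive on every symmetric relation on
five points. The diagonal values of `A` do not occur. -/
theorem symSum_gain_nonpos {V : Type*} (A : V → V → Bool) (hA : ∀ x y, A x y = A y x)
    (a b c d e : V) : symSum (gain A) a b c d e ≤ 0 := by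
  simp only [symSum, pairSum, gain, hA b a, hA c a, hA d a, hA e a, hA c b, hA d b, hA e b,
    hA d c, hA e c, hA e d]
  generalize A a b = ab
  generalize A a c = ac
  generalize A a d = ad
  generalize A a e = ae
  generalize A b c = bc
  generalize A b d = bd
  generalize A b e = be
  generalize A c d = cd
  generalize A c e = ce
  generalize A d e = de
  revert ab ac ad ae bc bd be cd ce de
  decide +kernel

def tuple₅ (V : Type*) : (Fin 5 → V) ≃ V × V × V × V × V where
  toFun v := (v 0, v 1, v 2, v 3, v 4)
  invFun p := ![p.1, p.2.1, p.2.2.1, p.2.2.2.1, p.2.2.2.2]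
  left_inv v := by ext i; fin_cases i <;> rfl
  right_inv p := rfl

/-- Each of the 30 terms of `symSum` has the same total, as permuting the coordinates of a 5-tuple is
a bijection. -/
theorem sum_symSum {V : Type*} [Fintype V] (f : V → V → V → V → V → ℤ) :
    ∑ a, ∑ b, ∑ c, ∑ d, ∑ e, symSum f a b c d e
      = 30 * ∑ a, ∑ b, ∑ c, ∑ d, ∑ e, f a b c d e := by
  have nest : ∀ F : V → V → V → V → V → ℤ, ∑ a, ∑ b, ∑ c, ∑ d, ∑ e, F a b c d e
      = ∑ v : Fin 5 → V, F (v 0) (v 1) (v 2) (v 3) (v 4) := fun F => by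
    rw [← (tuple₅ V).symm.sum_comp]
    simp only [Fintype.sum_prod_type]
    rfl
  rw [nest, nest]
  generalize hS : ∑ v : Fin 5 → V, f (v 0) (v 1) (v 2) (v 3) (v 4) = S
  have h : ∀ i j k l m : Fin 5, Function.Injective ![i, j, k, l, m] →
      ∑ v : Fin 5 → V, f (v i) (v j) (v k) (v l) (v m) = S := fun i j k l m H => by
    rw [← hS]
    exact ((Equiv.ofBijective _ (Finite.injective_iff_bijective.1 H)).arrowCongr
      (Equiv.refl V)).symm.sum_comp fun v => f (v 0) (v 1) (v 2) (v 3) (v 4)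
  simp only [symSum, pairSum, Finset.sum_add_distrib]
  simp (disch := decide) only [h]
  ring

/-- At most half of all 4-tuples, repetitions allowed, have exactly two adjacent pairs. -/
theorem two_sum_le {V : Type*} [Fintype V] (A : V → V → Bool) (hA : ∀ x y, A x y = A y x) :
    2 * ∑ x, ∑ y, ∑ z, ∑ w, two (A x y) (A x z) (A y z) (A w x) (A w y) (A w z)
      ≤ (Fintype.card V : ℤ) ^ 4 := by
  set n : ℤ := (Fintype.card V : ℤ) with hn
  set T := ∑ x, ∑ y, ∑ z, ∑ w, two (A x y) (A x z) (A y z) (A w x) (A w y) (A w z) with hT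
  have h₁ : ∑ a, ∑ b, ∑ c, ∑ d, ∑ e, gain A a b c d e ≤ 0 := by
    have : ∑ a, ∑ b, ∑ c, ∑ d, ∑ e, symSum (gain A) a b c d e ≤ 0 :=
      Finset.sum_nonpos fun a _ => Finset.sum_nonpos fun b _ => Finset.sum_nonpos fun c _ =>
        Finset.sum_nonpos fun d _ => Finset.sum_nonpos fun e _ =>
          symSum_gain_nonpos A hA a b c d e
    rw [sum_symSum] at this
    linarith
  have h₂ : 0 ≤ ∑ x, ∑ y, ∑ z, ∑ w, ∑ t, kern (A x y) (A x z) (A y z) (A w x) (A w y) (A w z)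
      (A t x) (A t y) (A t z) :=
    Finset.sum_nonneg fun x _ => Finset.sum_nonneg fun y _ => Finset.sum_nonneg fun z _ =>
      kern_sum_nonneg _ _ _ (fun w => A w x) (fun w => A w y) (fun w => A w z)
  have h₃ : 240 * n * T ≤ 120 * n ^ 5 := by
    simp only [gain, Finset.sum_add_distrib, Finset.sum_sub_distrib, ← Finset.mul_sum,
      Finset.sum_const, Finset.card_univ, nsmul_eq_mul, ← hn, ← hT] at h₁
    linarith
  rcases (show (0:ℤ) ≤ n by positivity).eq_or_lt with h0 | h0
  · have : IsEmpty V := Fintype.card_eq_zero_iff.1 (by rw [hn] at h0; exact_mod_cast h0.symm)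
    simp [hT, ← h0]
  · nlinarith

/-! ### From 4-subsets to 4-tuples -/

theorem edgesOn_eq_two_iff {n : ℕ} (G : SimpleGraph (Fin n)) (v : Fin 4 → Fin n)
    (hv : Function.Injective v) :
    edgesOn G (univ.image v) = 2 ↔ two (decide (G.Adj (v 0) (v 1))) (decide (G.Adj (v 0) (v 2)))
      (decide (G.Adj (v 1) (v 2))) (decide (G.Adj (v 3) (v 0))) (decide (G.Adj (v 3) (v 1)))
      (decide (G.Adj (v 3) (v 2))) = 1 := by
  have hmap : univ.image v = (univ : Finset (Fin 4)).map ⟨v, hv⟩ := by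
    rw [Finset.map_eq_image]; rfl
  have hps : powersetCard 2 (univ : Finset (Fin 4))
      = {{0, 1}, {0, 2}, {1, 2}, {3, 0}, {3, 1}, {3, 2}} := by decide
  have hcard : edgesOn G (univ.image v)
      = (decide (G.Adj (v 0) (v 1))).toNat + (decide (G.Adj (v 0) (v 2))).toNat
        + (decide (G.Adj (v 1) (v 2))).toNat + (decide (G.Adj (v 3) (v 0))).toNat
        + (decide (G.Adj (v 3) (v 1))).toNat + (decide (G.Adj (v 3) (v 2))).toNat := by
    rw [edgesOn, hmap, Finset.powersetCard_map, Finset.filter_map, Finset.card_map,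
      Finset.card_filter, hps]
    rw [Finset.sum_insert (by decide), Finset.sum_insert (by decide),
      Finset.sum_insert (by decide), Finset.sum_insert (by decide),
      Finset.sum_insert (by decide), Finset.sum_singleton]
    simp [G.adj_comm (v 1) (v 0), G.adj_comm (v 2) (v 0), G.adj_comm (v 2) (v 1),
      G.adj_comm (v 0) (v 3), G.adj_comm (v 1) (v 3), G.adj_comm (v 2) (v 3), Bool.toNat,
      Bool.cond_decide]
    ring
  rw [hcard, two]
  split_ifs with h <;> simp [h]

/-- The 4-tuples of vertices, repetitions allowed, with exactly two adjacent pairs. -/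
noncomputable def goodTuples {n : ℕ} (G : SimpleGraph (Fin n)) : Finset (Fin 4 → Fin n) :=
  univ.filter fun v => two (decide (G.Adj (v 0) (v 1))) (decide (G.Adj (v 0) (v 2)))
      (decide (G.Adj (v 1) (v 2))) (decide (G.Adj (v 3) (v 0))) (decide (G.Adj (v 3) (v 1)))
      (decide (G.Adj (v 3) (v 2))) = 1

/-- Every 4-subset with two edges is enumerated by `4! = 24` injective tuples. -/
theorem klCount_mul {n : ℕ} (G : SimpleGraph (Fin n)) :
    24 * klCount G 4 2 = ((goodTuples G).filter Function.Injective).card := by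
  rw [Finset.card_eq_sum_card_fiberwise (f := fun v => univ.image v)
    (t := (Finset.univ.powersetCard 4).filter (fun s => edgesOn G s = 2))]
  · rw [Finset.sum_const_nat (m := 24), klCount, mul_comm]
    intro s hs
    simp only [mem_filter, mem_powersetCard, subset_univ, true_and] at hs
    -- The fibre over `s` is the orbit of its increasing enumeration under `Perm (Fin 4)`.
    have hr : ∀ x, x ∈ s ↔ ∃ i, s.orderEmbOfFin hs.1 i = x := fun x => by
      rw [← Finset.mem_coe, ← Finset.range_orderEmbOfFin s hs.1, Set.mem_range]
    have : ((goodTuples G).filter Function.Injective).filter (fun v => univ.image v = s)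
        = univ.image fun σ : Equiv.Perm (Fin 4) => fun i => s.orderEmbOfFin hs.1 (σ i) := by
      ext v
      simp only [mem_filter, mem_image, mem_univ, true_and]
      constructor
      · rintro ⟨⟨-, hv⟩, him⟩
        have : ∀ i, ∃ j, s.orderEmbOfFin hs.1 j = v i := fun i =>
          (hr _).1 (him ▸ mem_image_of_mem v (mem_univ i))
        choose σ hσ using this
        have hi : Function.Injective σ := fun i j h => hv (by rw [← hσ, ← hσ, h])
        exact ⟨Equiv.ofBijective σ (Finite.injective_iff_bijective.1 hi), funext hσ⟩
      · rintro ⟨σ, rfl⟩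
        have hv : Function.Injective fun i => s.orderEmbOfFin hs.1 (σ i) :=
          (s.orderEmbOfFin hs.1).injective.comp σ.injective
        have him : univ.image (fun i => s.orderEmbOfFin hs.1 (σ i)) = s := by
          ext x
          rw [hr, mem_image]
          constructor
          · rintro ⟨i, -, h⟩
            exact ⟨_, h⟩
          · rintro ⟨i, h⟩
            exact ⟨σ.symm i, mem_univ _, by simpa using h⟩
        refine ⟨⟨?_, hv⟩, him⟩
        rw [goodTuples, mem_filter]
        exact ⟨mem_univ _, (edgesOn_eq_two_iff G _ hv).1 (by rw [him]; exact hs.2)⟩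
    rw [this, Finset.card_image_of_injective, Finset.card_univ, Fintype.card_perm,
      Fintype.card_fin]
    · rfl
    · intro σ τ h
      ext i
      exact congrArg _ ((s.orderEmbOfFin hs.1).injective (congrFun h i))
  · intro v hv
    simp only [goodTuples, coe_filter, mem_filter, mem_univ, true_and, Set.mem_ofPred_eq] at hv
    simp only [coe_filter, mem_powersetCard, subset_univ, true_and, Set.mem_ofPred_eq]
    exact ⟨by rw [card_image_of_injective _ hv.2]; simp, (edgesOn_eq_two_iff G v hv.2).2 hv.1⟩

theorem descFactorial_eq {n : ℕ} (h : 4 ≤ n) :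
    (24 * n.choose 4 : ℝ) = n * (n - 1) * (n - 2) * (n - 3) := by
  have := Nat.descFactorial_eq_factorial_mul_choose n 4
  obtain ⟨m, rfl⟩ := Nat.exists_eq_add_of_le' h
  simp [Nat.descFactorial, Nat.factorial] at this
  have h2 : ((24 * (m+4).choose 4 : ℕ) : ℝ) = _ := congrArg Nat.cast this.symm
  push_cast at h2 ⊢
  rw [h2]
  ring

/-- There are `n ^ 4 - 24 * n.choose 4` noninjective tuples, so discarding them from `goodTuples G`
loses at most that many. -/
theorem good_le {n : ℕ} (G : SimpleGraph (Fin n)) :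
    (goodTuples G).card + 24 * n.choose 4 ≤ n ^ 4 + 24 * klCount G 4 2 := by
  have h1 : (univ.filter fun v : Fin 4 → Fin n => Function.Injective v).card = 24 * n.choose 4 := by
    rw [← Fintype.card_subtype, Fintype.card_congr (Equiv.subtypeInjectiveEquivEmbedding _ _),
      Fintype.card_embedding_eq, Fintype.card_fin, Fintype.card_fin,
      Nat.descFactorial_eq_factorial_mul_choose]
    rfl
  rw [klCount_mul, ← h1, ← Finset.card_union_add_card_inter]
  refine Nat.add_le_add ?_ (Finset.card_le_card fun v => by simp)
  exact (Finset.card_le_univ _).trans (by simp)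

def tuple₄ (V : Type*) : (Fin 4 → V) ≃ V × V × V × V where
  toFun v := (v 0, v 1, v 2, v 3)
  invFun p := ![p.1, p.2.1, p.2.2.1, p.2.2.2]
  left_inv v := by ext i; fin_cases i <;> rfl
  right_inv p := rfl

theorem cast_ite_two (a b c d e f : Bool) :
    ((if two a b c d e f = 1 then 1 else 0 : ℕ) : ℤ) = two a b c d e f := by
  unfold two
  split_ifs <;> simp_all

theorem two_mul_goodTuples_le {n : ℕ} (G : SimpleGraph (Fin n)) :
    2 * (goodTuples G).card ≤ n ^ 4 := by
  have h := two_sum_le (fun x y => decide (G.Adj x y)) (fun x y => by simp only [G.adj_comm])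
  have hc : ((goodTuples G).card : ℤ) = ∑ x, ∑ y, ∑ z, ∑ w,
      two (decide (G.Adj x y)) (decide (G.Adj x z)) (decide (G.Adj y z))
        (decide (G.Adj w x)) (decide (G.Adj w y)) (decide (G.Adj w z)) := by
    rw [goodTuples, Finset.card_filter, Nat.cast_sum, ← (tuple₄ (Fin n)).symm.sum_comp]
    simp only [Fintype.sum_prod_type]
    refine sum_congr rfl fun x _ => sum_congr rfl fun y _ => sum_congr rfl fun z _ =>
      sum_congr rfl fun w _ => ?_
    exact cast_ite_two _ _ _ _ _ _
  rw [← hc, Fintype.card_fin] at h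
  exact_mod_cast h

/-! ### The blow-up of two disjoint triangles -/

/-- Adjacency in the disjoint union of the triangles `{0, 1, 2}` and `{3, 4, 5}`. -/
def twoTriangles (r s : Fin 6) : Bool := decide (r ≠ s) && decide (r.val / 3 = s.val / 3)

/-- The balanced blow-up of two disjoint triangles: the class of `i` is `i % 6`, and each class is
independent. -/
def blowUp (n : ℕ) : SimpleGraph (Fin n) where
  Adj a b := twoTriangles (Fin.ofNat 6 a) (Fin.ofNat 6 b) = true
  symm := ⟨fun a b h => by
    have : ∀ r s, twoTriangles r s = true → twoTriangles s r = true := by decide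
    exact this _ _ h⟩
  loopless := ⟨fun a h => by
    have : ∀ r, twoTriangles r r ≠ true := by decide
    exact this _ h⟩

/-- The 4-tuples of colours for which exactly two of the six pairs are adjacent in two disjoint
triangles. -/
def goodColourings : Finset (Fin 6 × Fin 6 × Fin 6 × Fin 6) :=
  univ.filter fun p => two (twoTriangles p.1 p.2.1) (twoTriangles p.1 p.2.2.1)
    (twoTriangles p.2.1 p.2.2.1) (twoTriangles p.2.2.2 p.1) (twoTriangles p.2.2.2 p.2.1)
    (twoTriangles p.2.2.2 p.2.2.1) = 1

theorem card_goodColourings : goodColourings.card = 648 := by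
  decide +kernel

/-- Only the vertices below `6 * (n / 6)` are used: `6 * u + r` with `u < n / 6` has colour `r`, so each
good colouring is realised by `(n / 6) ^ 4` tuples. -/
theorem le_card_goodTuples_blowUp (n : ℕ) :
    648 * (n / 6) ^ 4 ≤ (goodTuples (blowUp n)).card := by
  have hlt : ∀ (r : Fin 6) (u : Fin (n / 6)), 6 * u.val + r.val < n := fun r u => by omega
  have hcard : (goodColourings ×ˢ (univ : Finset (Fin 4 → Fin (n / 6)))).card
      = 648 * (n / 6) ^ 4 := by
    rw [card_product, card_goodColourings]; simp
  rw [← hcard]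
  refine Finset.card_le_card_of_injOn
    (fun q i => ⟨6 * (q.2 i).val + ((tuple₄ _).symm q.1 i).val, hlt _ _⟩) ?_ ?_
  · rintro ⟨p, u⟩ h
    have hof : ∀ (r : Fin 6) (u : ℕ), Fin.ofNat 6 (6 * u + r.val) = r := fun r u => by
      ext; simp [Fin.ofNat]
    simp only [goodColourings, coe_product, Set.mem_prod, coe_filter, mem_univ, true_and,
      Set.mem_ofPred_eq] at h
    rw [Finset.mem_coe, goodTuples, mem_filter]
    refine ⟨mem_univ _, ?_⟩
    simp only [blowUp, hof, Bool.decide_eq_true]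
    exact h.1
  · rintro ⟨p, u⟩ - ⟨p', u'⟩ - h
    have h1 : ∀ i, 6 * (u i).val + ((tuple₄ _).symm p i).val
        = 6 * (u' i).val + ((tuple₄ _).symm p' i).val :=
      fun i => congrArg Fin.val (congrFun h i)
    have h2 : u = u' := by
      funext i; have := h1 i; ext; omega
    have h3 : p = p' := by
      apply (tuple₄ (Fin 6)).symm.injective
      funext i; have := h1 i; ext; omega
    rw [h2, h3]

/-! ### The limit -/

/-- The maximal `(4,2)`-density over graphs on `n ≥ 4` vertices tends to `1/2`. -/
theorem edgeInducibility_four_two (M : ℕ → ℝ)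
    (hM : ∀ n, 4 ≤ n →
      IsGreatest {d : ℝ | ∃ G : SimpleGraph (Fin n), d = klDensity G 4 2} (M n)) :
    Tendsto M atTop (𝓝 (1 / 2 : ℝ)) := by
  have hlim : Tendsto (fun n : ℕ => (n : ℝ)⁻¹) atTop (𝓝 0) := tendsto_inv_atTop_nhds_zero_nat
  have hden : ∀ c : ℝ, Tendsto (fun n : ℕ => 1 - c * (n : ℝ)⁻¹) atTop (𝓝 1) := fun c => by
    simpa using (hlim.const_mul c).const_sub 1
  have hD : Tendsto (fun n : ℕ => (1 - 1 * (n : ℝ)⁻¹) * (1 - 2 * (n : ℝ)⁻¹) * (1 - 3 * (n : ℝ)⁻¹))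
      atTop (𝓝 1) := by
    simpa using ((hden 1).mul (hden 2)).mul (hden 3)
  -- `24 * n.choose 4 / n ^ 4` is the product in `hD`; the bounds are `(1 / 2) / D` and
  -- `1 + ((1 / 2) * (1 - 5 / n) ^ 4 - 1) / D`, where `648 / 6 ^ 4 = 1 / 2` and `n / 6 ≥ (n - 5) / 6`.
  have hup := (tendsto_const_nhds (x := (1 / 2 : ℝ))).div hD one_ne_zero
  have hlo := ((((hden 5).pow 4).const_mul (1 / 2)).sub_const 1).div hD one_ne_zero |>.const_add 1
  norm_num only at hup hlo
  have hchoose : ∀ n : ℕ, 4 ≤ n → (24 * n.choose 4 : ℝ)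
      = n ^ 4 * ((1 - 1 * (n : ℝ)⁻¹) * (1 - 2 * (n : ℝ)⁻¹) * (1 - 3 * (n : ℝ)⁻¹)) :=
    fun n hn => by
      have : (n : ℝ) ≠ 0 := by positivity
      rw [descFactorial_eq hn]
      field_simp
  have hpos : ∀ n : ℕ, 4 ≤ n → (0 : ℝ) < n.choose 4 := fun n hn => by
    exact_mod_cast Nat.choose_pos hn
  refine tendsto_of_tendsto_of_tendsto_of_le_of_le' hlo hup ?_ ?_
  · filter_upwards [eventually_ge_atTop 5] with n hn5
    have hn : 4 ≤ n := by omega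
    have hn0 : (0 : ℝ) < n := by positivity
    refine le_trans ?_ ((hM n hn).2 ⟨blowUp n, rfl⟩)
    have h1 : (goodTuples (blowUp n)).card + (24 * n.choose 4 : ℝ)
        ≤ n ^ 4 + 24 * klCount (blowUp n) 4 2 := by exact_mod_cast good_le (blowUp n)
    have h2 : 648 * ((n / 6 : ℕ) : ℝ) ^ 4 ≤ (goodTuples (blowUp n)).card := by
      exact_mod_cast le_card_goodTuples_blowUp n
    have h3 : ((n : ℝ) - 5) / 6 ≤ ((n / 6 : ℕ) : ℝ) := by
      have : n ≤ 6 * (n / 6) + 5 := by omega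
      have : (n : ℝ) ≤ 6 * ((n / 6 : ℕ) : ℝ) + 5 := by exact_mod_cast this
      linarith
    have h4 : (((n : ℝ) - 5) / 6) ^ 4 ≤ ((n / 6 : ℕ) : ℝ) ^ 4 := by
      have : (5 : ℝ) ≤ n := by exact_mod_cast hn5
      exact pow_le_pow_left₀ (by linarith) h3 4
    have hc := hchoose n hn
    have hp := hpos n hn
    simp only [Pi.div_apply]
    rw [klDensity, le_div_iff₀ hp]
    set D := (1 - 1 * (n : ℝ)⁻¹) * (1 - 2 * (n : ℝ)⁻¹) * (1 - 3 * (n : ℝ)⁻¹)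
    have hDpos : 0 < D := by
      have : 0 < (n : ℝ) ^ 4 * D := by rw [← hc]; positivity
      exact pos_of_mul_pos_right this (by positivity)
    have hch : (n.choose 4 : ℝ) = n ^ 4 * D / 24 := by linarith
    rw [hch] at h1 ⊢
    field_simp at h1 ⊢
    rw [div_pow] at h4
    linarith
  · filter_upwards [eventually_ge_atTop 4] with n hn
    obtain ⟨G, hG⟩ := (hM n hn).1
    have h1 : 24 * klCount G 4 2 ≤ (goodTuples G).card := by
      rw [klCount_mul]; exact Finset.card_filter_le _ _
    have h2 := two_mul_goodTuples_le G
    have h3 : 48 * (klCount G 4 2 : ℝ) ≤ n ^ 4 := by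
      exact_mod_cast (by omega : 48 * klCount G 4 2 ≤ n ^ 4)
    have hc := hchoose n hn
    have hp := hpos n hn
    simp only [Pi.div_apply]
    set D := (1 - 1 * (n : ℝ)⁻¹) * (1 - 2 * (n : ℝ)⁻¹) * (1 - 3 * (n : ℝ)⁻¹)
    have hDpos : 0 < D := by
      have : 0 < (n : ℝ) ^ 4 * D := by rw [← hc]; positivity
      exact pos_of_mul_pos_right this (by positivity)
    rw [hG, klDensity, div_le_div_iff₀ hp hDpos]
    nlinarith
end

section
/- Let T(n) denote the maximum, over all simple graphs G on n vertices (n ≥ 3) with at most (1/2)·binomial(n,2) edges, of the triangle density of G. Then T(n) converges as n → ∞ and its limit equals √2/4 (that is, 1/√8). -/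
/-!
Write `m` and `t` for the numbers of edges and triangles of a graph on `n` vertices.

The upper bound rests on `(6t)² ≤ (2m)³` (`sq_klCount_le`). The ordered triangle count `6t` is the
sum of (adjacency indicator) × (codegree) over ordered pairs of vertices, so by Cauchy–Schwarz its
square is at most `2m` times the sum of the squared codegrees. That sum counts the quadruples
`(x, y, z, w)` with `xz`, `yz`, `xw`, `yw` all edges, hence is at most the number `(2m)²` of pairs
of ordered edges `(x, z)`, `(y, w)`. When `2m ≤ n (n - 1) / 2`, this bounds the triangle density by
`(√2 / 4) · n / (n - 2)`.

For the lower bound, a clique on `k = ⌊n / √2⌋` vertices has at most half of all possible edges and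
triangle density at least `((k - 2) / n)³`, which tends to `(1 / √2)³ = √2 / 4`.
-/

open Finset Filter
open scoped Classical Topology

/-! ### Triangles versus edges -/

/-- Cauchy–Schwarz over pairs `(x, y)`, applied to `A x y` and the codegree `∑ z, A x z * A y z`;
the sum of the squared codegrees counts closed walks `x z y w`, of which one keeps only the two
opposite edges `xz` and `yw`. -/
lemma sq_sum_triangle_le {V : Type*} [Fintype V] (A : V → V → ℝ)
    (h0 : ∀ x y, 0 ≤ A x y) (h1 : ∀ x y, A x y ≤ 1) :
    (∑ p : V × V, A p.1 p.2 * ∑ z, A p.1 z * A p.2 z) ^ 2 ≤ (∑ p : V × V, A p.1 p.2) ^ 3 := by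
  have hE : 0 ≤ ∑ p : V × V, A p.1 p.2 := Finset.sum_nonneg fun p _ => h0 _ _
  have hA : ∑ p : V × V, A p.1 p.2 ^ 2 ≤ ∑ p : V × V, A p.1 p.2 :=
    Finset.sum_le_sum fun p _ => pow_le_of_le_one (h0 _ _) (h1 _ _) two_ne_zero
  have hC : ∑ p : V × V, (∑ z, A p.1 z * A p.2 z) ^ 2 ≤ (∑ p : V × V, A p.1 p.2) ^ 2 := by
    calc ∑ p : V × V, (∑ z, A p.1 z * A p.2 z) ^ 2
        = ∑ x, ∑ y, ∑ z, ∑ w, (A x z * A y z) * (A x w * A y w) := by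
          rw [Fintype.sum_prod_type]
          simp only [pow_two, Finset.sum_mul_sum]
      _ ≤ ∑ x, ∑ y, ∑ z, ∑ w, A x z * A y w := by
          refine Finset.sum_le_sum fun x _ => Finset.sum_le_sum fun y _ =>
            Finset.sum_le_sum fun z _ => Finset.sum_le_sum fun w _ => ?_
          have := mul_nonneg (h0 x z) (h0 y w)
          have h2 : A y z * A x w ≤ 1 := mul_le_one₀ (h1 _ _) (h0 _ _) (h1 _ _)
          calc (A x z * A y z) * (A x w * A y w)
              = (A x z * A y w) * (A y z * A x w) := by ring
            _ ≤ A x z * A y w := mul_le_of_le_one_right this h2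
      _ = (∑ p : V × V, A p.1 p.2) ^ 2 := by
          rw [Fintype.sum_prod_type, pow_two, Finset.sum_mul_sum]
          simp only [Finset.sum_mul_sum]
  calc _ ≤ (∑ p : V × V, A p.1 p.2 ^ 2) * ∑ p : V × V, (∑ z, A p.1 z * A p.2 z) ^ 2 :=
        Finset.sum_mul_sq_le_sq_mul_sq _ _ _
    _ ≤ (∑ p : V × V, A p.1 p.2) * (∑ p : V × V, A p.1 p.2) ^ 2 :=
        mul_le_mul hA hC (Finset.sum_nonneg fun _ _ => sq_nonneg _) hE
    _ = _ := by ring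

lemma card_adj_pairs_le {n : ℕ} (G : SimpleGraph (Fin n)) :
    (univ.filter fun p : Fin n × Fin n => G.Adj p.1 p.2).card ≤ 2 * edgesOn G univ := by
  unfold edgesOn
  refine Finset.card_le_mul_card_image_of_maps_to (f := fun p => {p.1, p.2}) ?_ 2 ?_
  · rintro ⟨x, y⟩ h
    have h' : G.Adj x y := by simpa using h
    simp only [Finset.mem_filter, Finset.mem_powersetCard, Finset.subset_univ, true_and]
    exact ⟨Finset.card_pair h'.ne, x, by simp, y, by simp, h'⟩
  · intro e he
    obtain ⟨a, b, -, rfl⟩ := Finset.card_eq_two.1 (Finset.mem_powersetCard.1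
      (Finset.mem_filter.1 he).1).2
    refine (Finset.card_le_card (t := {(a, b), (b, a)}) ?_).trans Finset.card_le_two
    rintro ⟨x, y⟩ h
    simp only [Finset.mem_filter, Finset.mem_univ, true_and] at h
    have hne := h.1.ne
    have hx : x ∈ ({a, b} : Finset (Fin n)) := h.2 ▸ by simp
    have hy : y ∈ ({a, b} : Finset (Fin n)) := h.2 ▸ by simp
    simp only [Finset.mem_insert, Finset.mem_singleton, Prod.mk.injEq] at hx hy ⊢
    grind

lemma edgesOn_eq_three_iff {n : ℕ} (G : SimpleGraph (Fin n)) {s : Finset (Fin n)}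
    (hs : s.card = 3) :
    edgesOn G s = 3 ↔ ∀ a ∈ s, ∀ b ∈ s, a ≠ b → G.Adj a b := by
  have hc : (s.powersetCard 2).card = 3 := by rw [Finset.card_powersetCard, hs]; rfl
  unfold edgesOn
  constructor
  · intro h a ha b hb hab
    obtain ⟨x, hx, y, hy, hxy⟩ := Finset.card_filter_eq_iff.1 (h.trans hc.symm) {a, b}
      (Finset.mem_powersetCard.2 ⟨by simp [Finset.insert_subset_iff, ha, hb],
        Finset.card_pair hab⟩)
    simp only [Finset.mem_insert, Finset.mem_singleton] at hx hy
    have := hxy.ne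
    have := hxy.symm
    grind
  · intro h
    refine Eq.trans ?_ hc
    rw [Finset.card_filter_eq_iff]
    intro e he
    obtain ⟨he, h2⟩ := Finset.mem_powersetCard.1 he
    obtain ⟨a, b, hab, rfl⟩ := Finset.card_eq_two.1 h2
    exact ⟨a, by simp, b, by simp, h a (he (by simp)) b (he (by simp)) hab⟩

lemma six_mul_klCount_le {n : ℕ} (G : SimpleGraph (Fin n)) :
    6 * klCount G 3 3 ≤ (univ.filter fun q : (Fin n × Fin n) × Fin n =>
      G.Adj q.1.1 q.1.2 ∧ G.Adj q.1.1 q.2 ∧ G.Adj q.1.2 q.2).card := by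
  unfold klCount
  rw [mul_comm]
  -- Each triangle `s` has at least six orderings, and orderings of distinct triangles differ.
  have key : ∀ s ∈ (univ.powersetCard 3).filter (fun s => edgesOn G s = 3),
      6 ≤ (((univ.filter fun q : (Fin n × Fin n) × Fin n =>
        G.Adj q.1.1 q.1.2 ∧ G.Adj q.1.1 q.2 ∧ G.Adj q.1.2 q.2)).filter
          fun q => ({q.1.1, q.1.2, q.2} : Finset (Fin n)) = s).card := by
    intro s hs
    obtain ⟨hs, h3⟩ := Finset.mem_filter.1 hs
    have hc := (Finset.mem_powersetCard.1 hs).2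
    rw [edgesOn_eq_three_iff G hc] at h3
    obtain ⟨a, b, c, hab, hac, hbc, rfl⟩ := Finset.card_eq_three.1 hc
    have h1 := h3 a (by simp) b (by simp) hab
    have h2 := h3 a (by simp) c (by simp) hac
    have h3 := h3 b (by simp) c (by simp) hbc
    have h6 : ({((a, b), c), ((a, c), b), ((b, a), c), ((b, c), a), ((c, a), b), ((c, b), a)} :
        Finset ((Fin n × Fin n) × Fin n)).card = 6 := by
      simp [hab, hac, hbc, hab.symm, hac.symm, hbc.symm]
    rw [← h6]
    apply Finset.card_le_card
    intro q hq
    simp only [Finset.mem_insert, Finset.mem_singleton] at hq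
    simp only [Finset.mem_filter, Finset.mem_univ, true_and]
    rcases hq with rfl | rfl | rfl | rfl | rfl | rfl <;>
      refine ⟨by simp [h1, h2, h3, h1.symm, h2.symm, h3.symm], ?_⟩ <;> ext x <;>
      simp only [Finset.mem_insert, Finset.mem_singleton] <;> grind
  generalize (univ.powersetCard 3).filter (fun s => edgesOn G s = 3) = S at key ⊢
  generalize (univ.filter fun q : (Fin n × Fin n) × Fin n =>
    G.Adj q.1.1 q.1.2 ∧ G.Adj q.1.1 q.2 ∧ G.Adj q.1.2 q.2) = O at key ⊢
  have h := Finset.card_nsmul_le_sum S _ 6 key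
  rw [smul_eq_mul, ← Finset.card_biUnion] at h
  · exact h.trans (Finset.card_le_card (Finset.biUnion_subset.2 fun s _ => Finset.filter_subset _ _))
  · intro s _ t _ hst
    exact Finset.disjoint_left.2 fun q hq hq' =>
      hst ((Finset.mem_filter.1 hq).2.symm.trans (Finset.mem_filter.1 hq').2)

/-- A form of the Kruskal–Katona bound for triangles: with `t` triangles and `m` edges,
`(6t)² ≤ (2m)³`. -/
lemma sq_klCount_le {n : ℕ} (G : SimpleGraph (Fin n)) :
    (6 * klCount G 3 3 : ℝ) ^ 2 ≤ (2 * edgesOn G univ : ℝ) ^ 3 := by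
  have h := sq_sum_triangle_le (fun x y : Fin n => if G.Adj x y then (1 : ℝ) else 0)
    (fun x y => by split_ifs <;> norm_num) (fun x y => by split_ifs <;> norm_num)
  have hE : ∑ p : Fin n × Fin n, (if G.Adj p.1 p.2 then (1 : ℝ) else 0)
      ≤ 2 * edgesOn G univ := by
    rw [Finset.sum_boole]
    exact_mod_cast card_adj_pairs_le G
  have hT : (6 * klCount G 3 3 : ℝ) ≤ ∑ p : Fin n × Fin n, (if G.Adj p.1 p.2 then (1 : ℝ) else 0) *
      ∑ z, (if G.Adj p.1 z then (1 : ℝ) else 0) * (if G.Adj p.2 z then (1 : ℝ) else 0) := by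
    have := six_mul_klCount_le G
    have h' : (6 * klCount G 3 3 : ℝ) ≤ ((univ.filter fun q : (Fin n × Fin n) × Fin n =>
      G.Adj q.1.1 q.1.2 ∧ G.Adj q.1.1 q.2 ∧ G.Adj q.1.2 q.2).card : ℝ) := by exact_mod_cast this
    refine h'.trans (le_of_eq ?_)
    rw [← Finset.sum_boole, Fintype.sum_prod_type]
    refine Finset.sum_congr rfl fun p _ => ?_
    rw [Finset.mul_sum]
    refine Finset.sum_congr rfl fun z _ => ?_
    by_cases h1 : G.Adj p.1 p.2 <;> by_cases h2 : G.Adj p.1 z <;> by_cases h3 : G.Adj p.2 z <;>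
      simp [h1, h2, h3]
  calc _ ≤ _ := pow_le_pow_left₀ (by positivity) hT 2
    _ ≤ _ := h
    _ ≤ _ := pow_le_pow_left₀ (Finset.sum_nonneg fun _ _ => by split_ifs <;> norm_num) hE 3

/-! ### Upper bound on the density -/

lemma six_mul_choose_three (n : ℕ) :
    6 * (n.choose 3 : ℝ) = n * (n - 1) * (n - 2) := by
  induction n with
  | zero => simp
  | succ k ih =>
    rw [Nat.choose_succ_succ' k 2]
    push_cast
    rw [Nat.cast_choose_two]
    linear_combination ih

lemma klDensity_le {n : ℕ} (hn : 3 ≤ n) (G : SimpleGraph (Fin n))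
    (hG : (edgesOn G univ : ℝ) ≤ (1 / 2 : ℝ) * (n.choose 2 : ℝ)) :
    klDensity G 3 3 ≤ Real.sqrt 2 / 4 * (n / (n - 2)) := by
  have hn' : (3 : ℝ) ≤ n := by exact_mod_cast hn
  have h := sq_klCount_le G
  rw [Nat.cast_choose_two] at hG
  have h2 : (2 * edgesOn G univ : ℝ) ^ 3 ≤ (n * (n - 1) / 2) ^ 3 :=
    pow_le_pow_left₀ (by positivity) (by linarith) 3
  have hs : Real.sqrt 2 ^ 2 = 2 := Real.sq_sqrt (by norm_num)
  have h3 : (6 * klCount G 3 3 : ℝ) ≤ Real.sqrt 2 / 4 * (n * (n * (n - 1))) := by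
    refine le_of_sq_le_sq ((h.trans h2).trans ?_)
      (mul_nonneg (by positivity) (mul_nonneg (by linarith) (mul_nonneg (by linarith) (by linarith))))
    have e : (Real.sqrt 2 / 4 * (n * (n * (n - 1)))) ^ 2
        = (n : ℝ) ^ 3 * (n - 1) ^ 2 / 8 * n := by
      rw [mul_pow, div_pow, hs]; ring
    rw [e]
    calc ((n : ℝ) * (n - 1) / 2) ^ 3 = (n : ℝ) ^ 3 * (n - 1) ^ 2 / 8 * (n - 1) := by ring
      _ ≤ _ := by gcongr; linarith
  have hc := six_mul_choose_three n
  have p2 : (0 : ℝ) < n - 2 := by linarith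
  have p1 : (0 : ℝ) < n - 1 := by linarith
  have hcp : (0 : ℝ) < n.choose 3 := by exact_mod_cast Nat.choose_pos hn
  unfold klDensity
  rw [div_le_iff₀ hcp]
  have e : Real.sqrt 2 / 4 * (n / (n - 2)) * (n.choose 3 : ℝ)
      = Real.sqrt 2 / 4 * (n * (n * (n - 1))) / 6 := by
    rw [show (n.choose 3 : ℝ) = n * (n - 1) * (n - 2) / 6 by linarith]
    field_simp
  rw [e]
  linarith

/-! ### The extremal clique -/

/-- The complete graph on the vertices `0, …, k - 1`, all other vertices being isolated. -/
def initialClique (n k : ℕ) : SimpleGraph (Fin n) where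
  Adj a b := a ≠ b ∧ a.val < k ∧ b.val < k
  symm := ⟨fun _ _ h => ⟨h.1.symm, h.2.2, h.2.1⟩⟩
  loopless := ⟨fun _ h => h.1 rfl⟩

lemma card_initial {n k : ℕ} (hk : k ≤ n) : (univ.filter fun a : Fin n => a.val < k).card = k := by
  rw [Fin.card_filter_val_lt, min_eq_right hk]

lemma edgesOn_initialClique_le {n k : ℕ} (hk : k ≤ n) :
    edgesOn (initialClique n k) univ ≤ k.choose 2 := by
  rw [← card_initial hk, ← Finset.card_powersetCard, card_initial hk]
  unfold edgesOn
  apply Finset.card_le_card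
  intro e he
  simp only [Finset.mem_filter, Finset.mem_powersetCard, Finset.subset_univ, true_and] at he
  obtain ⟨hc, a, ha, b, hb, hab, h1, h2⟩ := he
  refine Finset.mem_powersetCard.2 ⟨?_, hc⟩
  have : ({a, b} : Finset (Fin n)) = e := Finset.eq_of_subset_of_card_le
    (by simp [Finset.insert_subset_iff, ha, hb]) (by rw [hc, Finset.card_pair hab])
  rw [← this]
  simp [Finset.insert_subset_iff, h1, h2]

lemma choose_three_le_klCount {n k : ℕ} (hk : k ≤ n) :
    k.choose 3 ≤ klCount (initialClique n k) 3 3 := by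
  conv_lhs => rw [← card_initial hk, ← Finset.card_powersetCard]
  unfold klCount
  apply Finset.card_le_card
  intro s hs
  obtain ⟨hs, hc⟩ := Finset.mem_powersetCard.1 hs
  refine Finset.mem_filter.2 ⟨Finset.mem_powersetCard.2 ⟨Finset.subset_univ _, hc⟩, ?_⟩
  rw [edgesOn_eq_three_iff _ hc]
  exact fun a ha b hb hab =>
    ⟨hab, (Finset.mem_filter.1 (hs ha)).2, (Finset.mem_filter.1 (hs hb)).2⟩

/-- A clique on at most `n / √2` vertices has at most half of all possible edges. -/
lemma initialClique_edges {n k : ℕ} (hn : 2 ≤ n) (hk : (k : ℝ) ≤ Real.sqrt 2 / 2 * n) :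
    k ≤ n ∧ (edgesOn (initialClique n k) univ : ℝ) ≤ (1 / 2 : ℝ) * (n.choose 2 : ℝ) := by
  have hs : Real.sqrt 2 ^ 2 = 2 := Real.sq_sqrt (by norm_num)
  have hs1 : 1 ≤ Real.sqrt 2 := Real.one_le_sqrt.2 (by norm_num)
  have hs2 : Real.sqrt 2 ≤ 2 := by nlinarith
  have hn' : (2 : ℝ) ≤ n := by exact_mod_cast hn
  have hkn : k ≤ n := by
    have : (k : ℝ) ≤ n := by nlinarith
    exact_mod_cast this
  refine ⟨hkn, ?_⟩
  have h1 : (edgesOn (initialClique n k) univ : ℝ) ≤ k.choose 2 := by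
    exact_mod_cast edgesOn_initialClique_le hkn
  refine h1.trans ?_
  rw [Nat.cast_choose_two, Nat.cast_choose_two]
  have hx : 1 ≤ Real.sqrt 2 / 2 * n := by nlinarith
  -- With `x = n / √2`, `x (x - 1) - k (k - 1) = (x - k) (x + k - 1) ≥ 0`, while
  -- `x (x - 1) = n² / 2 - n / √2 ≤ n (n - 1) / 2`.
  have h2 : (k : ℝ) * (k - 1) ≤ (Real.sqrt 2 / 2 * n) * (Real.sqrt 2 / 2 * n - 1) := by
    have h0 : (0 : ℝ) ≤ k := k.cast_nonneg
    nlinarith [mul_nonneg (sub_nonneg.2 hk) (by linarith : (0:ℝ) ≤ k + (Real.sqrt 2 / 2 * n - 1))]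
  have h3 : (Real.sqrt 2 / 2 * n) * (Real.sqrt 2 / 2 * n - 1)
      = (n : ℝ) ^ 2 / 2 - Real.sqrt 2 / 2 * n := by
    linear_combination (n : ℝ) ^ 2 / 4 * hs
  nlinarith

lemma le_klDensity_initialClique {n k : ℕ} (hn : 3 ≤ n) (hk : k ≤ n) (hk2 : 2 ≤ k) :
    ((k : ℝ) / n - 2 / n) ^ 3 ≤ klDensity (initialClique n k) 3 3 := by
  have hn' : (3 : ℝ) ≤ n := by exact_mod_cast hn
  have hk' : (2 : ℝ) ≤ k := by exact_mod_cast hk2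
  have hcp : (0 : ℝ) < n.choose 3 := by exact_mod_cast Nat.choose_pos hn
  have h : (k.choose 3 : ℝ) ≤ klCount (initialClique n k) 3 3 := by
    exact_mod_cast choose_three_le_klCount hk
  have e1 := six_mul_choose_three n
  have e2 := six_mul_choose_three k
  have h1 : ((k : ℝ) - 2) ^ 3 ≤ 6 * k.choose 3 := by
    rw [e2]
    nlinarith [mul_nonneg (by linarith : (0:ℝ) ≤ k - 2) (by linarith : (0:ℝ) ≤ 3 * k - 4)]
  have h2 : 6 * (n.choose 3 : ℝ) ≤ n ^ 3 := by
    rw [e1]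
    nlinarith [mul_nonneg (by linarith : (0:ℝ) ≤ n) (by linarith : (0:ℝ) ≤ 3 * n - 2)]
  have hp : (0 : ℝ) ≤ (k - 2) ^ 3 := pow_nonneg (by linarith) 3
  calc ((k : ℝ) / n - 2 / n) ^ 3 = ((k : ℝ) - 2) ^ 3 / (n : ℝ) ^ 3 := by rw [← sub_div, div_pow]
    _ ≤ (6 * (k.choose 3 : ℝ)) / (6 * (n.choose 3 : ℝ)) := by gcongr
    _ = (k.choose 3 : ℝ) / (n.choose 3 : ℝ) := mul_div_mul_left _ _ (by norm_num)
    _ ≤ _ := by unfold klDensity; gcongr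

/-! ### The limit -/

/-- The maximal triangle density over `n`-vertex graphs (`n ≥ 3`) with at most
`(1/2)·choose(n,2)` edges tends to `√2/4`. -/
theorem kruskalKatona_triangles (T : ℕ → ℝ)
    (hT : ∀ n, 3 ≤ n →
      IsGreatest {d : ℝ | ∃ G : SimpleGraph (Fin n),
        (edgesOn G Finset.univ : ℝ) ≤ (1 / 2 : ℝ) * (n.choose 2 : ℝ) ∧
        d = klDensity G 3 3} (T n)) :
    Tendsto T atTop (𝓝 (Real.sqrt 2 / 4)) := by
  set k : ℕ → ℕ := fun n => ⌊Real.sqrt 2 / 2 * (n : ℝ)⌋₊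
  have hk : Tendsto (fun n : ℕ => (k n : ℝ) / n) atTop (𝓝 (Real.sqrt 2 / 2)) :=
    (tendsto_nat_floor_mul_div_atTop (R := ℝ) (by positivity)).comp tendsto_natCast_atTop_atTop
  have h2n : Tendsto (fun n : ℕ => (2 : ℝ) / n) atTop (𝓝 0) :=
    tendsto_const_div_atTop_nhds_zero_nat 2
  have hlow : Tendsto (fun n : ℕ => ((k n : ℝ) / n - 2 / n) ^ 3) atTop (𝓝 (Real.sqrt 2 / 4)) := by
    have hs : Real.sqrt 2 ^ 2 = 2 := Real.sq_sqrt (by norm_num)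
    have e : (Real.sqrt 2 / 2 - 0) ^ 3 = Real.sqrt 2 / 4 := by
      linear_combination Real.sqrt 2 / 8 * hs
    rw [← e]
    exact (hk.sub h2n).pow 3
  have hup : Tendsto (fun n : ℕ => Real.sqrt 2 / 4 * ((n : ℝ) / (n - 2))) atTop
      (𝓝 (Real.sqrt 2 / 4)) := by
    have h : Tendsto (fun n : ℕ => Real.sqrt 2 / 4 * (1 - (2 : ℝ) / n)⁻¹) atTop
        (𝓝 (Real.sqrt 2 / 4)) := by
      simpa using ((tendsto_const_nhds.sub h2n).inv₀ (by norm_num : (1 : ℝ) - 0 ≠ 0)).const_mul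
        (Real.sqrt 2 / 4)
    refine h.congr' ?_
    filter_upwards [eventually_ge_atTop 3] with n hn
    have hn' : (3 : ℝ) ≤ n := by exact_mod_cast hn
    have p : (n : ℝ) - 2 ≠ 0 := by linarith
    have q : (n : ℝ) ≠ 0 := by linarith
    rw [one_sub_div q, inv_div]
  refine tendsto_of_tendsto_of_tendsto_of_le_of_le' hlow hup ?_ ?_
  · filter_upwards [eventually_ge_atTop 4] with n hn
    have hn' : (4 : ℝ) ≤ n := by exact_mod_cast hn
    have hs1 : 1 ≤ Real.sqrt 2 := Real.one_le_sqrt.2 (by norm_num)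
    have hk2 : 2 ≤ k n := Nat.le_floor (by push_cast; nlinarith)
    obtain ⟨hkn, hedge⟩ := initialClique_edges (n := n) (k := k n) (by omega)
      (Nat.floor_le (by positivity))
    exact (le_klDensity_initialClique (by omega) hkn hk2).trans
      ((hT n (by omega)).2 ⟨_, hedge, rfl⟩)
  · filter_upwards [eventually_ge_atTop 3] with n hn
    obtain ⟨G, hG, hd⟩ := (hT n hn).1
    rw [hd]
    exact klDensity_le hn G hG
end
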